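/- arXiv:1410.4887 — 2 statements merged into one kernel-verified Lean document; each statement's English description precedes it below -/
import Mathlib

section
/- Let (X,μ,S,T) be an ergodic measure preserving system with commuting transformations S and T, and let f0, f1, f2, f3 ∈ L∞(μ). Then the averages (1/N⁴) Σ_{i,j,k,p=0}^{N-1} f0(S^i T^j x) · f1(S^{i+k} T^j x) · f2(S^i T^{j+p} x) · f3(S^{i+k} T^{j+p} x) converge for μ-almost every x ∈ X, as N → ∞, to ∫ f0(x0) f1(x1) f2(x2) f3(x3) dμ_{S,T}(x0,x1,x2,x3). -/
open MeasureTheory Filter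

/-- The σ-algebra of `R`-invariant measurable sets. -/
def invSigma {X : Type*} [MeasurableSpace X] (R : X → X) : MeasurableSpace X where
  MeasurableSet' s := MeasurableSet s ∧ R ⁻¹' s = s
  measurableSet_empty := ⟨MeasurableSet.empty, rfl⟩
  measurableSet_compl s hs := ⟨hs.1.compl, by rw [Set.preimage_compl, hs.2]⟩
  measurableSet_iUnion f hf := ⟨MeasurableSet.iUnion fun i => (hf i).1, by
    rw [Set.preimage_iUnion]; exact Set.iUnion_congr fun i => (hf i).2⟩

/-- `μ2` is the relatively independent self-joining of `μ` over the σ-algebra of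
`R`-invariant sets: `∫ f0 ⊗ f1 dμ2 = ∫ E(f0|I_R)·E(f1|I_R) dμ` for all bounded
measurable `f0, f1`. -/
def IsRelIndJoining {X : Type*} [MeasurableSpace X] (μ : Measure X) (R : X → X)
    (μ2 : Measure (X × X)) : Prop :=
  ∀ f0 f1 : X → ℝ, Measurable f0 → Measurable f1 →
    (∃ C, ∀ x, |f0 x| ≤ C) → (∃ C, ∀ x, |f1 x| ≤ C) →
    ∫ p, f0 p.1 * f1 p.2 ∂μ2 =
      ∫ x, (μ[f0 | invSigma R]) x * (μ[f1 | invSigma R]) x ∂μ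

/-- `μ4` is the relatively independent self-joining of `μ2` over the σ-algebra of
`(T × T)`-invariant sets (the Host measure `μ_{S,T}` when `μ2 = μ_S`). -/
def IsHostJoining {X : Type*} [MeasurableSpace X] (μ2 : Measure (X × X)) (T : X → X)
    (μ4 : Measure (X × X × X × X)) : Prop :=
  ∀ f0 f1 f2 f3 : X → ℝ, Measurable f0 → Measurable f1 → Measurable f2 → Measurable f3 →
    (∃ C, ∀ x, |f0 x| ≤ C) → (∃ C, ∀ x, |f1 x| ≤ C) →
    (∃ C, ∀ x, |f2 x| ≤ C) → (∃ C, ∀ x, |f3 x| ≤ C) →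
    ∫ p, f0 p.1 * f1 p.2.1 * f2 p.2.2.1 * f3 p.2.2.2 ∂μ4 =
      ∫ q, (μ2[(fun r => f0 r.1 * f1 r.2) | invSigma (Prod.map T T)]) q *
           (μ2[(fun r => f2 r.1 * f3 r.2) | invSigma (Prod.map T T)]) q ∂μ2

open MeasureTheory Filter

/-- Cesàro average of the first `N` terms. -/
noncomputable def avg (N : ℕ) (u : ℕ → ℝ) : ℝ := (N : ℝ)⁻¹ * ∑ i ∈ Finset.range N, u i

lemma avg_mono {N : ℕ} {u v : ℕ → ℝ} (h : ∀ i, u i ≤ v i) : avg N u ≤ avg N v := by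
  unfold avg
  exact mul_le_mul_of_nonneg_left (Finset.sum_le_sum fun i _ => h i) (by positivity)

lemma avg_mono' {N : ℕ} {u v : ℕ → ℝ} (h : ∀ i < N, u i ≤ v i) : avg N u ≤ avg N v := by
  unfold avg
  exact mul_le_mul_of_nonneg_left (Finset.sum_le_sum fun i hi => h i (Finset.mem_range.1 hi))
    (by positivity)

lemma avg_nonneg {N : ℕ} {u : ℕ → ℝ} (h : ∀ i, 0 ≤ u i) : 0 ≤ avg N u := by
  unfold avg
  exact mul_nonneg (by positivity) (Finset.sum_nonneg fun i _ => h i)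

lemma abs_avg_le (N : ℕ) (u : ℕ → ℝ) : |avg N u| ≤ avg N (fun i => |u i|) := by
  unfold avg
  rw [abs_mul, abs_of_nonneg (by positivity : (0:ℝ) ≤ (N : ℝ)⁻¹)]
  exact mul_le_mul_of_nonneg_left (Finset.abs_sum_le_sum_abs _ _) (by positivity)

lemma avg_add (N : ℕ) (u v : ℕ → ℝ) : avg N (fun i => u i + v i) = avg N u + avg N v := by
  unfold avg; rw [Finset.sum_add_distrib]; ring

lemma avg_sub (N : ℕ) (u v : ℕ → ℝ) : avg N (fun i => u i - v i) = avg N u - avg N v := by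
  unfold avg; rw [Finset.sum_sub_distrib]; ring

lemma avg_mul_left (N : ℕ) (c : ℝ) (u : ℕ → ℝ) : avg N (fun i => c * u i) = c * avg N u := by
  unfold avg; rw [← Finset.mul_sum]; ring

lemma avg_mul_right (N : ℕ) (c : ℝ) (u : ℕ → ℝ) : avg N (fun i => u i * c) = avg N u * c := by
  unfold avg; rw [← Finset.sum_mul]; ring

lemma avg_const {N : ℕ} (hN : 0 < N) (c : ℝ) : avg N (fun _ => c) = c := by
  unfold avg; have : (N : ℝ) ≠ 0 := by positivity
  simp; field_simp

lemma avg_zero_left (u : ℕ → ℝ) : avg 0 u = 0 := by simp [avg]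

lemma avg_le_const {N : ℕ} {u : ℕ → ℝ} {c : ℝ} (hc : 0 ≤ c) (h : ∀ i, u i ≤ c) : avg N u ≤ c := by
  rcases Nat.eq_zero_or_pos N with rfl | hN
  · rw [avg_zero_left]; exact hc
  · exact (avg_mono h).trans_eq (avg_const hN c)

lemma avg_le_const' {N : ℕ} {u : ℕ → ℝ} {c : ℝ} (hc : 0 ≤ c) (h : ∀ i < N, u i ≤ c) :
    avg N u ≤ c := by
  rcases Nat.eq_zero_or_pos N with rfl | hN
  · rw [avg_zero_left]; exact hc
  · exact (avg_mono' h).trans_eq (avg_const hN c)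

lemma abs_avg_le_const {N : ℕ} {u : ℕ → ℝ} {c : ℝ} (hc : 0 ≤ c) (h : ∀ i, |u i| ≤ c) :
    |avg N u| ≤ c := (abs_avg_le N u).trans (avg_le_const hc h)

lemma avg_comm (N M : ℕ) (u : ℕ → ℕ → ℝ) :
    avg N (fun i => avg M (fun j => u i j)) = avg M (fun j => avg N (fun i => u i j)) := by
  unfold avg
  simp only [← Finset.mul_sum]
  rw [Finset.sum_comm]; ring

lemma avg_mul_avg (N M : ℕ) (u v : ℕ → ℝ) :
    avg N u * avg M v = avg N (fun i => avg M (fun j => u i * v j)) := by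
  simp only [avg_mul_left, avg_mul_right]

lemma avg_shift {N p : ℕ} {v : ℕ → ℝ} (hv : ∀ i, 0 ≤ v i) (hp : p ≤ N) :
    avg N (fun j => v (j + p)) ≤ 2 * avg (2 * N) v := by
  unfold avg
  rcases Nat.eq_zero_or_pos N with rfl | hN
  · simp
  have h1 : ∑ i ∈ Finset.range N, v (i + p) ≤ ∑ i ∈ Finset.range (2 * N), v i := by
    have : ∑ i ∈ Finset.range N, v (i + p) = ∑ i ∈ (Finset.range N).map (addRightEmbedding p), v i := by
      simp
    rw [this]
    apply Finset.sum_le_sum_of_subset_of_nonneg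
    · intro x hx
      simp at hx ⊢
      obtain ⟨a, ha, rfl⟩ := hx
      omega
    · intro i _ _; exact hv i
  have hN' : (0:ℝ) < N := by exact_mod_cast hN
  push_cast
  calc (N : ℝ)⁻¹ * ∑ i ∈ Finset.range N, v (i + p) ≤ (N : ℝ)⁻¹ * ∑ i ∈ Finset.range (2 * N), v i :=
        mul_le_mul_of_nonneg_left h1 (by positivity)
    _ = _ := by field_simp

lemma sum_shift_sub (P h : ℕ) (u : ℕ → ℝ) (C : ℝ) (hu : ∀ i, |u i| ≤ C) :
    |∑ p ∈ Finset.range P, u p - ∑ p ∈ Finset.range P, u (p + h)| ≤ 2 * C * h := by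
  have e1 : ∑ p ∈ Finset.range P, u (p + h) = ∑ p ∈ Finset.range (P + h), u p - ∑ p ∈ Finset.range h, u p := by
    rw [add_comm P h, Finset.sum_range_add]
    simp [add_comm]
  have e2 : ∑ p ∈ Finset.range (P + h), u p = ∑ p ∈ Finset.range P, u p + ∑ p ∈ Finset.range h, u (P + p) :=
    Finset.sum_range_add _ _ _
  rw [e1, e2]
  have b1 : |∑ p ∈ Finset.range h, u p| ≤ C * h := by
    calc _ ≤ ∑ p ∈ Finset.range h, |u p| := Finset.abs_sum_le_sum_abs _ _
      _ ≤ ∑ p ∈ Finset.range h, C := Finset.sum_le_sum fun i _ => hu i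
      _ = C * h := by simp [mul_comm]
  have b2 : |∑ p ∈ Finset.range h, u (P + p)| ≤ C * h := by
    calc _ ≤ ∑ p ∈ Finset.range h, |u (P + p)| := Finset.abs_sum_le_sum_abs _ _
      _ ≤ ∑ p ∈ Finset.range h, C := Finset.sum_le_sum fun i _ => hu _
      _ = C * h := by simp [mul_comm]
  have := abs_le.1 b1
  have := abs_le.1 b2
  rw [abs_le]; constructor <;> linarith

lemma avg_shift_sub (P h : ℕ) (u : ℕ → ℝ) (C : ℝ) (hu : ∀ i, |u i| ≤ C) :
    |avg P u - avg P (fun p => u (p + h))| ≤ 2 * C * h / P := by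
  unfold avg
  rw [← mul_sub, abs_mul, abs_of_nonneg (by positivity : (0:ℝ) ≤ (P : ℝ)⁻¹), div_eq_inv_mul]
  exact mul_le_mul_of_nonneg_left (sum_shift_sub P h u C hu) (by positivity)

lemma avg_smooth {P H : ℕ} (hH : 0 < H) (u : ℕ → ℝ) (hu : ∀ i, |u i| ≤ 1) :
    |avg P u| ≤ avg P (fun p => |avg H (fun h => u (p + h))|) + 2 * H / P := by
  have h1 : avg P u - avg P (fun p => avg H (fun h => u (p + h))) =
      avg H (fun h => avg P u - avg P (fun p => u (p + h))) := by
    rw [avg_sub, avg_const hH, avg_comm]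
  have h2 : |avg P u - avg P (fun p => avg H (fun h => u (p + h)))| ≤ 2 * H / P := by
    rw [h1]
    unfold avg
    rw [abs_mul, abs_of_nonneg (by positivity : (0:ℝ) ≤ (H : ℝ)⁻¹)]
    have hHr : (0:ℝ) < H := by exact_mod_cast hH
    have : |∑ h ∈ Finset.range H, (avg P u - avg P (fun p => u (p + h)))| ≤ H * (2 * H / P) := by
      calc _ ≤ ∑ h ∈ Finset.range H, |avg P u - avg P (fun p => u (p + h))| := Finset.abs_sum_le_sum_abs _ _
        _ ≤ ∑ h ∈ Finset.range H, (2 * H / P : ℝ) := by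
            apply Finset.sum_le_sum
            intro h hh
            refine (avg_shift_sub P h u 1 hu).trans ?_
            have : (h : ℝ) ≤ H := by exact_mod_cast (Finset.mem_range.1 hh).le
            rw [mul_one]
            gcongr
        _ = _ := by simp
    unfold avg at this
    calc _ ≤ (H : ℝ)⁻¹ * (H * (2 * H / P)) := mul_le_mul_of_nonneg_left this (by positivity)
      _ = _ := by field_simp
  have h3 := abs_avg_le P (fun p => avg H (fun h => u (p + h)))
  have h4 := abs_sub_abs_le_abs_sub (avg P u) (avg P (fun p => avg H (fun h => u (p + h))))
  linarith

/-- The four-fold array average. -/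
noncomputable def arr (u0 u1 u2 u3 : ℕ → ℕ → ℝ) (q : ℕ × ℕ × ℕ) : ℝ :=
  avg q.1 fun i => avg q.1 fun j => avg q.2.1 fun k => avg q.2.2 fun p =>
    u0 i j * u1 (i + k) j * u2 i (j + p) * u3 (i + k) (j + p)

lemma abs_mul_le_one {a b : ℝ} (ha : |a| ≤ 1) (hb : |b| ≤ 1) : |a * b| ≤ 1 := by
  rw [abs_mul]; exact mul_le_one₀ ha (abs_nonneg _) hb

lemma arr_L1 {u0 u1 u2 u3 : ℕ → ℕ → ℝ} (h0 : ∀ i j, |u0 i j| ≤ 1) (h1 : ∀ i j, |u1 i j| ≤ 1)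
    (h2 : ∀ i j, |u2 i j| ≤ 1) {N K P : ℕ} (hK : K ≤ N) (hP : P ≤ N) :
    |arr u0 u1 u2 u3 (N, K, P)| ≤
      4 * avg (2 * N) fun i => avg (2 * N) fun j => |u3 i j| := by
  unfold arr
  simp only
  calc _ ≤ avg N fun i => avg N fun j => avg K fun k => avg P fun p => |u3 (i + k) (j + p)| := by
        refine (abs_avg_le _ _).trans (avg_mono fun i => (abs_avg_le _ _).trans (avg_mono fun j =>
          (abs_avg_le _ _).trans (avg_mono fun k => (abs_avg_le _ _).trans (avg_mono fun p => ?_))))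
        rw [abs_mul]
        exact mul_le_of_le_one_left (abs_nonneg _)
          (abs_mul_le_one (abs_mul_le_one (h0 _ _) (h1 _ _)) (h2 _ _))
    _ = avg K fun k => avg P fun p => avg N fun i => avg N fun j => |u3 (i + k) (j + p)| := by
        simp_rw [avg_comm N K, avg_comm N P]
    _ ≤ _ := ?_
  -- indices beyond the range are irrelevant: bound sums by hand
  have key : ∀ k ≤ N, ∀ p ≤ N, (avg N fun i => avg N fun j => |u3 (i + k) (j + p)|) ≤
      4 * avg (2 * N) fun i => avg (2 * N) fun j => |u3 i j| := by
    intro k hk p hp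
    calc _ ≤ avg N fun i => 2 * avg (2 * N) fun j => |u3 (i + k) j| :=
          avg_mono fun i => avg_shift (v := fun j => |u3 (i + k) j|) (fun _ => abs_nonneg _) hp
      _ ≤ 2 * avg (2 * N) fun i => 2 * avg (2 * N) fun j => |u3 i j| :=
          avg_shift (v := fun i => 2 * avg (2 * N) fun j => |u3 i j|)
            (fun _ => mul_nonneg (by norm_num) (avg_nonneg fun _ => abs_nonneg _)) hk
      _ = _ := by rw [avg_mul_left]; ring
  have pos : 0 ≤ 4 * avg (2 * N) fun i => avg (2 * N) fun j => |u3 i j| :=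
    mul_nonneg (by norm_num) (avg_nonneg fun _ => avg_nonneg fun _ => abs_nonneg _)
  exact avg_le_const' pos fun k hk => avg_le_const' pos fun p hp =>
    key k (hk.le.trans hK) p (hp.le.trans hP)

lemma abs_le_amgm {t : ℝ} (ht : 0 < t) (x : ℝ) : |x| ≤ t + t⁻¹ * x ^ 2 := by
  have h : t * |x| ≤ t * (t + t⁻¹ * x ^ 2) := by
    have : t * (t + t⁻¹ * x ^ 2) = t ^ 2 + x ^ 2 := by field_simp
    rw [this, ← sq_abs x]
    nlinarith [sq_nonneg (t - |x|), sq_nonneg t, sq_nonneg |x|]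
  exact le_of_mul_le_mul_left h ht

/-- Smoothing one variable of an array and enlarging the window. -/
lemma avg_avg_smooth {N P H : ℕ} (hH : 0 < H) (hP : P ≤ N) {t : ℝ} (ht : 0 < t) (u : ℕ → ℝ)
    (hu : ∀ i, |u i| ≤ 1) :
    (avg N fun j => |avg P fun p => u (j + p)|) ≤
      2 * H / P + t + 2 * t⁻¹ * avg (2 * N) fun m => (avg H fun h => u (m + h)) ^ 2 := by
  have ht' : 0 < t⁻¹ := by positivity
  have hbd : (0:ℝ) ≤ 2 * H / P := by positivity
  have h1 : ∀ j, |avg P fun p => u (j + p)| ≤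
      (2 * H / P + t) + t⁻¹ * avg P fun p => (avg H fun h => u (j + p + h)) ^ 2 := by
    intro j
    refine (avg_smooth hH (fun p => u (j + p)) fun p => hu _).trans ?_
    have : (avg P fun p => |avg H fun h => u (j + (p + h))|) ≤
        avg P fun p => (t + t⁻¹ * (avg H fun h => u (j + p + h)) ^ 2) := by
      refine avg_mono fun p => ?_
      simp_rw [← add_assoc]
      exact abs_le_amgm ht _
    rw [avg_add, avg_mul_left] at this
    have h3 : (avg P fun _ => t) ≤ t := avg_le_const ht.le fun _ => le_rfl
    linarith
  refine (avg_mono h1).trans ?_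
  rw [avg_add, avg_mul_left]
  have h2 : (avg N fun _ => 2 * (H:ℝ) / P + t) ≤ 2 * H / P + t :=
    avg_le_const (by positivity) fun _ => le_rfl
  have h3 : (avg N fun j => avg P fun p => (avg H fun h => u (j + p + h)) ^ 2) ≤
      2 * avg (2 * N) fun m => (avg H fun h => u (m + h)) ^ 2 := by
    rw [avg_comm]
    refine avg_le_const' (mul_nonneg (by norm_num) (avg_nonneg fun _ => sq_nonneg _)) fun p hp => ?_
    exact avg_shift (v := fun m => (avg H fun h => u (m + h)) ^ 2) (fun _ => sq_nonneg _)
      (hp.le.trans hP)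
  have h4 := mul_le_mul_of_nonneg_left h3 ht'.le
  linarith

lemma arr_null {u0 u1 u2 u3 : ℕ → ℕ → ℝ} (h0 : ∀ i j, |u0 i j| ≤ 1) (h1 : ∀ i j, |u1 i j| ≤ 1)
    (h2 : ∀ i j, |u2 i j| ≤ 1) (h3 : ∀ i j, |u3 i j| ≤ 1) {N K P H L : ℕ} (hK : K ≤ N) (hP : P ≤ N)
    (hH : 0 < H) (hL : 0 < L) {t : ℝ} (ht : 0 < t) :
    |arr u0 u1 u2 u3 (N, K, P)| ≤
      2 * H / P + t + 2 * t⁻¹ * (2 * L / K + t ^ 2 + 2 * (t ^ 2)⁻¹ *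
        avg H fun h => avg H fun h' => avg (2 * N) fun i => avg (2 * N) fun m =>
          (avg L fun l => u3 (i + l) (m + h) * u3 (i + l) (m + h')) ^ 2) := by
  have ht' : 0 < t⁻¹ := by positivity
  unfold arr
  simp only
  have e1 : |avg N fun i => avg N fun j => avg K fun k => avg P fun p =>
        u0 i j * u1 (i + k) j * u2 i (j + p) * u3 (i + k) (j + p)| ≤
      avg N fun i => avg K fun k => avg N fun j => |avg P fun p => u2 i (j + p) * u3 (i + k) (j + p)| := by
    refine (abs_avg_le _ _).trans (avg_mono fun i => ?_)
    rw [avg_comm]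
    refine (abs_avg_le _ _).trans (avg_mono fun k => ?_)
    refine (abs_avg_le _ _).trans (avg_mono fun j => ?_)
    simp_rw [mul_assoc (u0 i j * u1 (i + k) j)]
    rw [avg_mul_left, abs_mul]
    exact mul_le_of_le_one_left (abs_nonneg _) (abs_mul_le_one (h0 _ _) (h1 _ _))
  have hbd : (0:ℝ) ≤ 2 * H / P + t := by positivity
  have hbd2 : (0:ℝ) ≤ 2 * L / K + t ^ 2 := by positivity
  have e2 : (avg N fun i => avg K fun k => avg N fun j =>
        |avg P fun p => u2 i (j + p) * u3 (i + k) (j + p)|) ≤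
      (2 * H / P + t) + 2 * t⁻¹ * avg N fun i => avg K fun k => avg (2 * N) fun m =>
        (avg H fun h => u2 i (m + h) * u3 (i + k) (m + h)) ^ 2 := by
    have : ∀ i k, (avg N fun j => |avg P fun p => u2 i (j + p) * u3 (i + k) (j + p)|) ≤
        (2 * H / P + t) + 2 * t⁻¹ * avg (2 * N) fun m =>
          (avg H fun h => u2 i (m + h) * u3 (i + k) (m + h)) ^ 2 := fun i k =>
      avg_avg_smooth hH hP ht (fun m => u2 i m * u3 (i + k) m) fun m =>
        abs_mul_le_one (h2 _ _) (h3 _ _)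
    obtain ⟨c, hc⟩ : ∃ c : ℝ, c = 2 * H / P + t := ⟨_, rfl⟩
    simp only [← hc] at this hbd ⊢
    refine (avg_mono fun i => avg_mono fun k => this i k).trans ?_
    simp only [avg_add, avg_mul_left]
    gcongr
    exact avg_le_const hbd fun _ => avg_le_const hbd fun _ => le_rfl
  have e3 : (avg N fun i => avg K fun k => avg (2 * N) fun m =>
        (avg H fun h => u2 i (m + h) * u3 (i + k) (m + h)) ^ 2) =
      avg H fun h => avg H fun h' => avg (2 * N) fun m => avg N fun i =>
        (u2 i (m + h) * u2 i (m + h')) * avg K fun k => u3 (i + k) (m + h) * u3 (i + k) (m + h') := by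
    have : ∀ i k m, (avg H fun h => u2 i (m + h) * u3 (i + k) (m + h)) ^ 2 =
        avg H fun h => avg H fun h' => (u2 i (m + h) * u2 i (m + h')) *
          (u3 (i + k) (m + h) * u3 (i + k) (m + h')) := by
      intro i k m
      rw [sq, avg_mul_avg]
      congr 1; ext h; congr 1; ext h'; ring
    simp_rw [this, ← avg_mul_left]
    simp_rw [avg_comm (2 * N) H, avg_comm K H, avg_comm N H, avg_comm K (2 * N), avg_comm N (2 * N)]
  have e4 : (avg H fun h => avg H fun h' => avg (2 * N) fun m => avg N fun i =>
        (u2 i (m + h) * u2 i (m + h')) * avg K fun k => u3 (i + k) (m + h) * u3 (i + k) (m + h')) ≤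
      (2 * L / K + t ^ 2) + 2 * (t ^ 2)⁻¹ *
        avg H fun h => avg H fun h' => avg (2 * N) fun m => avg (2 * N) fun i =>
          (avg L fun l => u3 (i + l) (m + h) * u3 (i + l) (m + h')) ^ 2 := by
    have : ∀ h h' m, (avg N fun i =>
        (u2 i (m + h) * u2 i (m + h')) * avg K fun k => u3 (i + k) (m + h) * u3 (i + k) (m + h')) ≤
        (2 * L / K + t ^ 2) + 2 * (t ^ 2)⁻¹ * avg (2 * N) fun i =>
          (avg L fun l => u3 (i + l) (m + h) * u3 (i + l) (m + h')) ^ 2 := by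
      intro h h' m
      refine le_trans (avg_mono fun i => ?_) (avg_avg_smooth hL hK (by positivity : 0 < t ^ 2)
        (fun i => u3 i (m + h) * u3 i (m + h')) fun i => abs_mul_le_one (h3 _ _) (h3 _ _))
      refine (le_abs_self _).trans ?_
      rw [abs_mul]
      exact mul_le_of_le_one_left (abs_nonneg _) (abs_mul_le_one (h2 _ _) (h2 _ _))
    obtain ⟨c, hc⟩ : ∃ c : ℝ, c = 2 * L / K + t ^ 2 := ⟨_, rfl⟩
    simp only [← hc] at this hbd2 ⊢
    refine (avg_mono fun h => avg_mono fun h' => avg_mono fun m => this h h' m).trans ?_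
    simp only [avg_add, avg_mul_left]
    gcongr
    exact avg_le_const hbd2 fun _ => avg_le_const hbd2 fun _ => avg_le_const hbd2 fun _ => le_rfl
  have e5 : ∀ h h', (avg (2 * N) fun m => avg (2 * N) fun i =>
          (avg L fun l => u3 (i + l) (m + h) * u3 (i + l) (m + h')) ^ 2) =
      avg (2 * N) fun i => avg (2 * N) fun m =>
          (avg L fun l => u3 (i + l) (m + h) * u3 (i + l) (m + h')) ^ 2 := fun h h' => avg_comm _ _ _
  simp_rw [e5] at e4
  rw [e3] at e2
  have := mul_le_mul_of_nonneg_left e4 (by positivity : (0:ℝ) ≤ 2 * t⁻¹)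
  linarith
open MeasureTheory Filter
set_option linter.unusedSectionVars false

section birkhoff

variable {Y : Type*} [MeasurableSpace Y]

lemma invSigma_eq (R : Y → Y) : invSigma R = MeasurableSpace.invariants R := by
  ext s
  rw [MeasurableSpace.measurableSet_invariants]
  rfl

lemma invSigma_le (R : Y → Y) : invSigma R ≤ ‹MeasurableSpace Y› := fun _ h => h.1

lemma comp_eq_of_invSigma {R : Y → Y} {F : Y → ℝ} (h : Measurable[invSigma R] F) (y : Y) :
    F (R y) = F y := by
  rw [invSigma_eq] at h
  exact congrFun (MeasurableSpace.comp_eq_of_measurable_invariants h) y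

lemma iterate_eq_of_invSigma {R : Y → Y} {F : Y → ℝ} (h : Measurable[invSigma R] F) (n : ℕ) (y : Y) :
    F (R^[n] y) = F y := by
  induction n with
  | zero => rfl
  | succ n ih => rw [Function.iterate_succ_apply', comp_eq_of_invSigma h, ih]

/-- auxiliary maximal function -/
noncomputable def maxFun (R : Y → Y) (g : Y → ℝ) : ℕ → Y → ℝ
  | 0 => fun _ => 0
  | n + 1 => fun y => max 0 (g y + maxFun R g n (R y))

lemma maxFun_nonneg (R : Y → Y) (g : Y → ℝ) (n : ℕ) (y : Y) : 0 ≤ maxFun R g n y := by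
  cases n with
  | zero => exact le_rfl
  | succ n => exact le_max_left _ _

lemma maxFun_mono_succ (R : Y → Y) (g : Y → ℝ) (n : ℕ) : ∀ y, maxFun R g n y ≤ maxFun R g (n + 1) y := by
  induction n with
  | zero => intro y; exact maxFun_nonneg _ _ _ _
  | succ n ih =>
    intro y
    exact max_le_max le_rfl (by have := ih (R y); linarith)

lemma maxFun_mono (R : Y → Y) (g : Y → ℝ) (y : Y) : Monotone fun n => maxFun R g n y :=
  monotone_nat_of_le_succ fun n => maxFun_mono_succ R g n y

lemma sum_le_maxFun (R : Y → Y) (g : Y → ℝ) (n : ℕ) :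
    ∀ y, ∑ i ∈ Finset.range n, g (R^[i] y) ≤ maxFun R g n y := by
  induction n with
  | zero => intro y; simp [maxFun]
  | succ n ih =>
    intro y
    rw [Finset.sum_range_succ']
    have := ih (R y)
    simp only [Function.iterate_succ_apply, Function.iterate_zero, id]
    exact le_trans (by linarith) (le_max_right _ _)

lemma maxFun_eq_zero (R : Y → Y) (g : Y → ℝ) (n : ℕ) :
    ∀ y, (∀ i, g (R^[i] y) = 0) → maxFun R g n y = 0 := by
  induction n with
  | zero => intro y _; rfl
  | succ n ih =>
    intro y h
    have h1 := ih (R y) fun i => by have := h (i + 1); rwa [Function.iterate_succ_apply] at this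
    have h0 : g y = 0 := h 0
    simp [maxFun, h1, h0]

variable {ν : Measure Y} [IsProbabilityMeasure ν]

lemma maxFun_measurable {R : Y → Y} (hR : Measurable R) {g : Y → ℝ} (hg : Measurable g) (n : ℕ) :
    Measurable (maxFun R g n) := by
  induction n with
  | zero => exact measurable_const
  | succ n ih => exact measurable_const.max (hg.add (ih.comp hR))

lemma maxFun_integrable {R : Y → Y} (hR : MeasurePreserving R ν ν) {g : Y → ℝ} (hg : Integrable g ν)
    (n : ℕ) : Integrable (maxFun R g n) ν := by
  induction n with
  | zero => exact integrable_zero _ _ _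
  | succ n ih => exact (integrable_zero _ _ _).sup (hg.add (hR.integrable_comp_of_integrable ih))

lemma maximal_ergodic {R : Y → Y} (hR : MeasurePreserving R ν ν) {g : Y → ℝ} (hgm : Measurable g)
    (hg : Integrable g ν) (n : ℕ) : 0 ≤ ∫ y in {y | 0 < maxFun R g (n + 1) y}, g y ∂ν := by
  have hMm := maxFun_measurable hR.measurable hgm (n + 1)
  have hMi := maxFun_integrable hR hg (n + 1)
  set M := maxFun R g (n + 1) with hM
  have hMR : Integrable (fun y => M (R y)) ν := hR.integrable_comp_of_integrable hMi
  have hE : MeasurableSet {y | 0 < M y} := measurableSet_lt measurable_const hMm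
  have h1 : ∫ y, (M y - M (R y)) ∂ν = 0 := by
    rw [integral_sub hMi hMR]
    have : ∫ y, M (R y) ∂ν = ∫ y, M y ∂ν := by
      rw [← integral_map hR.aemeasurable (by rw [hR.map_eq]; exact hMm.aestronglyMeasurable), hR.map_eq]
    rw [this, sub_self]
  rw [← integral_indicator hE]
  refine h1.symm.le.trans ?_
  apply integral_mono (hMi.sub hMR) (hg.indicator hE)
  intro y
  by_cases hy : 0 < M y
  · simp only [Set.indicator, Set.mem_ofPred_eq, hy, if_true]
    have h2 : M y = g y + maxFun R g n (R y) := by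
      rw [hM] at hy ⊢
      simp only [maxFun] at hy ⊢
      rcases max_cases 0 (g y + maxFun R g n (R y)) with h | h
      · rw [h.1] at hy; exact absurd hy (lt_irrefl _)
      · exact h.1
    have := maxFun_mono_succ R g n (R y)
    rw [← hM] at this
    show M y - M (R y) ≤ g y
    linarith
  · simp only [Set.indicator, Set.mem_ofPred_eq, hy, if_false]
    have := maxFun_nonneg R g (n + 1) y
    have h3 := maxFun_nonneg R g (n + 1) (R y)
    rw [← hM] at this h3
    show M y - M (R y) ≤ 0
    linarith

/-- the sequence is frequently above `a`, with a margin -/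
def FreqGt (u : ℕ → ℝ) (a : ℝ) : Prop := ∃ k : ℕ, ∃ᶠ N in atTop, a + 1 / ((k : ℝ) + 1) < u N

lemma FreqGt.congr {u v : ℕ → ℝ} {a : ℝ} (h : FreqGt u a)
    (huv : Tendsto (fun N => u N - v N) atTop (nhds 0)) : FreqGt v a := by
  obtain ⟨k, hk⟩ := h
  obtain ⟨m, hm⟩ := exists_nat_one_div_lt (show (0:ℝ) < 1 / ((k : ℝ) + 1) by positivity)
  refine ⟨m, ?_⟩
  have h1 : ∀ᶠ N in atTop, u N - v N < 1 / ((k : ℝ) + 1) - 1 / ((m : ℝ) + 1) :=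
    huv.eventually (gt_mem_nhds (by linarith))
  exact (hk.and_eventually h1).mono fun N hN => by linarith [hN.1, hN.2]

lemma FreqGt.of_tendsto {u : ℕ → ℝ} {a l : ℝ} (h : Tendsto u atTop (nhds l)) (hl : a < l) :
    FreqGt u a := by
  obtain ⟨k, hk⟩ := exists_nat_one_div_lt (show (0:ℝ) < l - a by linarith)
  exact ⟨k, (h.eventually (lt_mem_nhds (by linarith))).frequently⟩

lemma FreqGt.lt_of_tendsto {u : ℕ → ℝ} {a l : ℝ} (h : Tendsto u atTop (nhds l)) (hu : FreqGt u a) :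
    a < l := by
  obtain ⟨k, hk⟩ := hu
  have : a + 1 / ((k : ℝ) + 1) ≤ l := by
    by_contra hc
    push Not at hc
    exact (hk.and_eventually (h.eventually (gt_mem_nhds hc))).exists.elim fun N hN => by
      linarith [hN.1, hN.2]
  have : (0:ℝ) < 1 / ((k : ℝ) + 1) := by positivity
  linarith

lemma measurableSet_freqGt {a : ℝ} {u : ℕ → Y → ℝ} (hu : ∀ N, Measurable (u N)) :
    MeasurableSet {y | FreqGt (fun N => u N y) a} := by
  have : {y | FreqGt (fun N => u N y) a} =
      ⋃ k : ℕ, ⋂ n : ℕ, ⋃ N : ℕ, ⋃ _ : n ≤ N, {y | a + 1 / ((k : ℝ) + 1) < u N y} := by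
    ext y
    simp [FreqGt, frequently_atTop]
  rw [this]
  exact MeasurableSet.iUnion fun k => MeasurableSet.iInter fun n => MeasurableSet.iUnion fun N =>
    MeasurableSet.iUnion fun _ => measurableSet_lt measurable_const (hu N)

lemma measurable_avg {u : ℕ → Y → ℝ} (hu : ∀ N, Measurable (u N)) (N : ℕ) :
    Measurable fun y => avg N fun i => u i y := by
  unfold avg
  exact measurable_const.mul (Finset.measurable_fun_sum _ fun i _ => hu i)

lemma integrable_of_bdd {f : Y → ℝ} (hf : Measurable f) {C : ℝ} (hC : ∀ y, |f y| ≤ C) :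
    Integrable f ν :=
  Integrable.of_bound hf.aestronglyMeasurable C (Eventually.of_forall hC)

lemma birkhoff_upper {R : Y → Y} (hR : MeasurePreserving R ν ν) {f : Y → ℝ} (hf : Measurable f)
    {C : ℝ} (hC : ∀ y, |f y| ≤ C) {e : ℝ} (he : 0 < e) :
    ∀ᵐ y ∂ν, ¬ FreqGt (fun N => avg N fun i => f (R^[i] y) - (ν[f | invSigma R]) y) e := by
  have hfi : Integrable f ν := integrable_of_bdd hf hC
  have hle := invSigma_le R
  set h := ν[f | invSigma R] with hh
  have hhm : Measurable[invSigma R] h := stronglyMeasurable_condExp.measurable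
  have hhm' : Measurable h := hhm.mono hle le_rfl
  have hhi : Integrable h ν := integrable_condExp
  have hIt : ∀ i, Measurable fun y => f (R^[i] y) - h y := fun i =>
    (hf.comp (hR.measurable.iterate i)).sub hhm'
  set B := {y | FreqGt (fun N => avg N fun i => f (R^[i] y) - h y) e} with hB
  have hBm : MeasurableSet B := measurableSet_freqGt fun N => measurable_avg hIt N
  have diff : ∀ y, Tendsto (fun N => (avg N fun i => f (R^[i] (R y)) - h (R y)) -
      avg N fun i => f (R^[i] y) - h y) atTop (nhds 0) := by
    intro y
    have hlim : Tendsto (fun N : ℕ => 2 * C * (1:ℕ) / (N:ℝ)) atTop (nhds 0) :=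
      tendsto_const_div_atTop_nhds_zero_nat _
    refine squeeze_zero_norm (fun N => ?_) hlim
    have h1 := avg_shift_sub N 1 (fun i => f (R^[i] y)) C fun i => hC _
    rw [← avg_sub, ← abs_neg, ← neg_one_mul, ← avg_mul_left] at h1
    rw [Real.norm_eq_abs, comp_eq_of_invSigma hhm, ← avg_sub]
    refine le_trans (le_of_eq ?_) h1
    congr 2
    ext i
    simp only [← Function.iterate_succ_apply]
    ring
  have hBinv : R ⁻¹' B = B := by
    ext y
    constructor
    · intro hy; exact FreqGt.congr hy (diff y)
    · intro hy
      refine FreqGt.congr hy ?_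
      have := (diff y).neg
      simpa using this
  have hBit : ∀ i y, R^[i] y ∈ B ↔ y ∈ B := by
    intro i
    induction i with
    | zero => intro y; rfl
    | succ i ih =>
      intro y
      rw [Function.iterate_succ_apply, ih]
      exact Set.ext_iff.1 hBinv y
  set g : Y → ℝ := B.indicator fun y => f y - h y - e with hg
  have hgm : Measurable g := ((hf.sub hhm').sub measurable_const).indicator hBm
  have hgi : Integrable g ν := ((hfi.sub hhi).sub (integrable_const e)).indicator hBm
  have hhit := fun n y => iterate_eq_of_invSigma hhm n y
  have hE : (⋃ n : ℕ, {y | 0 < maxFun R g (n + 1) y}) = B := by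
    ext y
    simp only [Set.mem_iUnion, Set.mem_ofPred_eq]
    constructor
    · rintro ⟨n, hn⟩
      by_contra hy
      rw [maxFun_eq_zero R g (n + 1) y fun i => ?_] at hn
      · exact lt_irrefl _ hn
      · have : R^[i] y ∉ B := by rwa [hBit]
        simp [hg, this]
    · intro hy
      obtain ⟨k, hk⟩ := id hy
      obtain ⟨N, hN1, hN2⟩ := frequently_atTop.1 hk 1
      refine ⟨N - 1, ?_⟩
      rw [Nat.sub_add_cancel hN1]
      refine lt_of_lt_of_le ?_ (sum_le_maxFun R g N y)
      have hyB : y ∈ B := hy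
      have e1 : ∀ i, g (R^[i] y) = (f (R^[i] y) - h y) - e := by
        intro i
        have : R^[i] y ∈ B := (hBit i y).2 hyB
        simp [hg, this, hhit]
      simp_rw [e1]
      have e2 : (N : ℝ)⁻¹ * ∑ i ∈ Finset.range N, ((f (R^[i] y) - h y) - e) > 0 := by
        have e3 := avg_sub N (fun i => f (R^[i] y) - h y) (fun _ => e)
        rw [avg_const hN1] at e3
        change avg N (fun i => f (R^[i] y) - h y - e) > 0
        rw [e3]
        have : (0:ℝ) < 1 / ((k : ℝ) + 1) := by positivity
        linarith
      have : (0:ℝ) < (N:ℝ)⁻¹ := by have : (0:ℝ) < N := by exact_mod_cast hN1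
                                   positivity
      exact pos_of_mul_pos_right e2 this.le
  have hmono : Monotone fun n : ℕ => {y | 0 < maxFun R g (n + 1) y} := fun a b hab y hy =>
    lt_of_lt_of_le hy (maxFun_mono R g y (by omega))
  have hlim := tendsto_setIntegral_of_monotone (μ := ν) (f := g)
    (fun n => measurableSet_lt measurable_const (maxFun_measurable hR.measurable hgm (n + 1)))
    hmono hgi.integrableOn
  have h0 : 0 ≤ ∫ y in ⋃ n : ℕ, {y | 0 < maxFun R g (n + 1) y}, g y ∂ν :=
    ge_of_tendsto' hlim fun n => maximal_ergodic hR hgm hgi n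
  rw [hE] at h0
  have e4 : ∫ y in B, g y ∂ν = ∫ y in B, (f y - h y - e) ∂ν :=
    setIntegral_congr_fun hBm fun y hy => by simp [hg, hy]
  have e5 : ∫ y in B, h y ∂ν = ∫ y in B, f y ∂ν :=
    setIntegral_condExp hle hfi ⟨hBm, hBinv⟩
  rw [e4, integral_sub (f := fun y => f y - h y) (hfi.sub hhi).integrableOn (integrable_const e),
    integral_sub hfi.integrableOn hhi.integrableOn, e5] at h0
  simp only [sub_self, integral_const, smul_eq_mul, zero_sub] at h0
  have h6 : (ν.restrict B).real Set.univ = 0 := by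
    have : 0 ≤ (ν.restrict B).real Set.univ := measureReal_nonneg
    nlinarith
  have h7 : ν B = 0 := by
    rw [measureReal_restrict_apply_univ] at h6
    exact (measureReal_eq_zero_iff).1 h6
  exact measure_eq_zero_iff_ae_notMem.1 h7

/-- Birkhoff's pointwise ergodic theorem for bounded functions. -/
theorem birkhoff_condExp {R : Y → Y} (hR : MeasurePreserving R ν ν) {f : Y → ℝ} (hf : Measurable f)
    {C : ℝ} (hC : ∀ y, |f y| ≤ C) :
    ∀ᵐ y ∂ν, Tendsto (fun N => avg N fun i => f (R^[i] y)) atTop (nhds ((ν[f | invSigma R]) y)) := by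
  have h1 : ∀ᵐ y ∂ν, ∀ k : ℕ, ¬ FreqGt (fun N => avg N fun i => f (R^[i] y) - (ν[f | invSigma R]) y)
      (1 / ((k : ℝ) + 1)) := ae_all_iff.2 fun k => birkhoff_upper hR hf hC (by positivity)
  have h2 : ∀ᵐ y ∂ν, ∀ k : ℕ, ¬ FreqGt (fun N => avg N fun i => (-f) (R^[i] y) -
      (ν[-f | invSigma R]) y) (1 / ((k : ℝ) + 1)) :=
    ae_all_iff.2 fun k => birkhoff_upper hR hf.neg (C := C) (fun y => by simpa using hC y) (by positivity)
  filter_upwards [h1, h2, condExp_neg (μ := ν) f (invSigma R)] with y h1 h2 h3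
  rw [Metric.tendsto_atTop]
  intro e he
  obtain ⟨k, hk⟩ := exists_nat_one_div_lt (show (0:ℝ) < e / 2 by linarith)
  have a1 := h1 k
  have a2 := h2 k
  have b1 := not_frequently.1 (not_exists.1 a1 k)
  have b2 := not_frequently.1 (not_exists.1 a2 k)
  simp only [not_lt] at b1 b2
  rw [← eventually_atTop (p := fun n => dist (avg n fun i => f (R^[i] y)) ((ν[f|invSigma R]) y) < e)]
  filter_upwards [b1, b2, eventually_gt_atTop 0] with N c1 c2 hN
  rw [h3, avg_sub, avg_const hN] at c2
  rw [avg_sub, avg_const hN] at c1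
  have e1 : (avg N fun i => (-f) (R^[i] y)) = - avg N fun i => f (R^[i] y) := by
    rw [← neg_one_mul (avg N _), ← avg_mul_left]; simp
  rw [e1] at c2
  simp only [Pi.neg_apply] at c2
  rw [Real.dist_eq, abs_lt]
  constructor <;> linarith

end birkhoff
open MeasureTheory Filter
set_option linter.unusedSectionVars false

section ergodic2

variable {Y : Type*} [MeasurableSpace Y] {ν : Measure Y} [IsProbabilityMeasure ν]

/-- clip to `[-C, C]` -/
noncomputable def clip (C : ℝ) (x : ℝ) : ℝ := max (-C) (min C x)

lemma abs_clip_le {C : ℝ} (hC : 0 ≤ C) (x : ℝ) : |clip C x| ≤ C := by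
  unfold clip
  rw [abs_le]
  exact ⟨le_max_left _ _, max_le (by linarith) (min_le_left _ _)⟩

lemma clip_eq {C x : ℝ} (h : |x| ≤ C) : clip C x = x := by
  rw [abs_le] at h
  unfold clip
  rw [min_eq_right h.2, max_eq_right h.1]

lemma measurable_clip (C : ℝ) : Measurable (clip C) :=
  measurable_const.max (measurable_const.min measurable_id)

lemma abs_sub_clip_le {C a : ℝ} (ha : |a| ≤ C) (x : ℝ) : |a - clip C x| ≤ |a - x| := by
  rw [abs_le] at ha
  unfold clip
  rcases le_total C x with h | h
  · rw [min_eq_left h, max_eq_right (by linarith), abs_of_nonpos (by linarith), abs_of_nonpos (by linarith)]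
    linarith
  · rw [min_eq_right h]
    rcases le_total (-C) x with h' | h'
    · rw [max_eq_right h']
    · rw [max_eq_left h', abs_of_nonneg (by linarith), abs_of_nonneg (by linarith)]
      linarith

lemma bdd_nonneg_of_prob {f : Y → ℝ} {C : ℝ} (ν : Measure Y) [IsProbabilityMeasure ν]
    (hC : ∀ y, |f y| ≤ C) : 0 ≤ C := by
  have : Nonempty Y := ν.nonempty_of_neZero
  exact (abs_nonneg _).trans (hC (Classical.arbitrary Y))

/-- Birkhoff with a bounded, exactly invariant limit. -/
theorem birkhoff_bdd {R : Y → Y} (hR : MeasurePreserving R ν ν) {f : Y → ℝ} (hf : Measurable f)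
    {C : ℝ} (hC : ∀ y, |f y| ≤ C) :
    ∃ F : Y → ℝ, Measurable[invSigma R] F ∧ Measurable F ∧ (∀ y, |F y| ≤ C) ∧
      F =ᵐ[ν] ν[f | invSigma R] ∧ ∫ y, F y ∂ν = ∫ y, f y ∂ν ∧
      ∀ᵐ y ∂ν, Tendsto (fun N => avg N fun i => f (R^[i] y)) atTop (nhds (F y)) := by
  have hC0 := bdd_nonneg_of_prob ν hC
  have hB := birkhoff_condExp hR hf hC
  have hm : Measurable[invSigma R] (ν[f | invSigma R]) := stronglyMeasurable_condExp.measurable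
  have hFm : Measurable[invSigma R] (fun y => clip C ((ν[f | invSigma R]) y)) :=
    (measurable_clip C).comp hm
  have hae : (fun y => clip C ((ν[f | invSigma R]) y)) =ᵐ[ν] ν[f | invSigma R] := by
    filter_upwards [hB] with y hy
    refine clip_eq ?_
    exact le_of_tendsto' (hy.abs) fun N => abs_avg_le_const hC0 fun i => hC _
  refine ⟨_, hFm, hFm.mono (invSigma_le R) le_rfl, fun y => abs_clip_le hC0 _, hae, ?_, ?_⟩
  · rw [integral_congr_ae hae, integral_condExp (invSigma_le R)]
  · filter_upwards [hB, hae] with y h1 h2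
    rw [h2]; exact h1

/-- a tail-maximal function -/
lemma exists_tail {a : ℕ → Y → ℝ} {F : Y → ℝ} (ha : ∀ N, Measurable (a N)) (hF : Measurable F)
    {C : ℝ} (hC : ∀ N y, |a N y - F y| ≤ C)
    (hlim : ∀ᵐ y ∂ν, Tendsto (fun N => a N y) atTop (nhds (F y))) :
    ∃ τ : ℕ → Y → ℝ, (∀ n, Measurable (τ n)) ∧ (∀ n y, 0 ≤ τ n y) ∧ (∀ n y, |τ n y| ≤ C) ∧
      (∀ n N y, n ≤ N → |a N y - F y| ≤ τ n y) ∧ Tendsto (fun n => ∫ y, τ n y ∂ν) atTop (nhds 0) := by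
  have hC0 := bdd_nonneg_of_prob ν (hC 0)
  have hbdd : ∀ n y, BddAbove (Set.range fun m => |a (n + m) y - F y|) := fun n y =>
    ⟨C, by rintro _ ⟨m, rfl⟩; exact hC _ _⟩
  set τ : ℕ → Y → ℝ := fun n y => ⨆ m : ℕ, |a (n + m) y - F y| with hτ
  have hm : ∀ n, Measurable (τ n) := fun n =>
    Measurable.iSup fun m => ((ha _).sub hF).abs
  have h0 : ∀ n y, 0 ≤ τ n y := fun n y => Real.iSup_nonneg fun m => abs_nonneg _
  have h1 : ∀ n y, |τ n y| ≤ C := fun n y => by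
    rw [abs_of_nonneg (h0 n y)]; exact ciSup_le fun m => hC _ _
  refine ⟨τ, hm, h0, h1, ?_, ?_⟩
  · intro n N y hN
    obtain ⟨m, rfl⟩ := Nat.exists_eq_add_of_le hN
    exact le_ciSup (hbdd n y) m
  · have : Tendsto (fun n => ∫ y, τ n y ∂ν) atTop (nhds (∫ _, (0:ℝ) ∂ν)) := by
      refine tendsto_integral_of_dominated_convergence (fun _ => C)
        (fun n => (hm n).aestronglyMeasurable) (integrable_const C)
        (fun n => Eventually.of_forall fun y => h1 n y) ?_
      filter_upwards [hlim] with y hy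
      rw [Metric.tendsto_atTop] at hy ⊢
      intro e he
      obtain ⟨N, hN⟩ := hy (e / 2) (by linarith)
      refine ⟨N, fun n hn => ?_⟩
      rw [Real.dist_eq, sub_zero, abs_of_nonneg (h0 n y)]
      refine lt_of_le_of_lt (ciSup_le fun m => ?_) (by linarith : e / 2 < e)
      have := hN (n + m) (by omega)
      rw [Real.dist_eq] at this
      exact this.le
    simpa using this

lemma ae_exists_lt_of_integral_tendsto_zero {e : ℕ → Y → ℝ} (hm : ∀ n, Measurable (e n))
    (h0 : ∀ n, ∀ᵐ y ∂ν, 0 ≤ e n y) (hi : ∀ n, Integrable (e n) ν)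
    (hlim : Tendsto (fun n => ∫ y, e n y ∂ν) atTop (nhds 0)) :
    ∀ᵐ y ∂ν, ∀ δ > 0, ∃ n, e n y < δ := by
  have h1 : ∫⁻ y, ⨅ n, ENNReal.ofReal (e n y) ∂ν = 0 := by
    have h2 : ∀ n, ∫⁻ y, ⨅ n, ENNReal.ofReal (e n y) ∂ν ≤ ENNReal.ofReal (∫ y, e n y ∂ν) := by
      intro n
      rw [ofReal_integral_eq_lintegral_ofReal (hi n) (h0 n)]
      exact lintegral_mono fun y => iInf_le _ n
    have h3 := (ENNReal.continuous_ofReal.tendsto 0).comp hlim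
    rw [ENNReal.ofReal_zero] at h3
    exact le_antisymm (ge_of_tendsto' h3 h2) (zero_le)
  rw [lintegral_eq_zero_iff (Measurable.iInf fun n => (hm n).ennreal_ofReal)] at h1
  filter_upwards [h1] with y hy δ hδ
  have : (⨅ n, ENNReal.ofReal (e n y)) < ENNReal.ofReal δ := by
    rw [hy]; exact ENNReal.ofReal_pos.2 hδ
  obtain ⟨n, hn⟩ := iInf_lt_iff.1 this
  exact ⟨n, (ENNReal.ofReal_lt_ofReal_iff hδ).1 hn⟩

lemma tendsto_of_approx {u : ℕ → ℝ} {l : ℝ} (h : ∀ δ > 0, ∀ᶠ N in atTop, |u N - l| ≤ δ) :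
    Tendsto u atTop (nhds l) := by
  rw [Metric.tendsto_atTop]
  intro e he
  obtain ⟨N, hN⟩ := eventually_atTop.1 (h (e / 2) (by linarith))
  exact ⟨N, fun n hn => by rw [Real.dist_eq]; linarith [hN n hn]⟩

/-- two-dimensional average -/
noncomputable def avg2 (S T : Y → Y) (φ : Y → ℝ) (N : ℕ) (y : Y) : ℝ :=
  avg N fun i => avg N fun j => φ (S^[i] (T^[j] y))

lemma measurable_avg2 {S T : Y → Y} (hS : Measurable S) (hT : Measurable T) {φ : Y → ℝ}
    (hφ : Measurable φ) (N : ℕ) : Measurable (avg2 S T φ N) :=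
  measurable_avg (fun i => measurable_avg (fun j =>
    hφ.comp ((hS.iterate i).comp (hT.iterate j))) N) N

/-- Two dimensional pointwise ergodic theorem for bounded functions. -/
theorem ergodic2 {S T : Y → Y} (hS : MeasurePreserving S ν ν) (hT : MeasurePreserving T ν ν)
    {φ : Y → ℝ} (hφ : Measurable φ) {C : ℝ} (hC : ∀ y, |φ y| ≤ C) :
    ∃ F : Y → ℝ, Measurable F ∧ (∀ y, |F y| ≤ C) ∧ ∫ y, F y ∂ν = ∫ y, φ y ∂ν ∧
      ∀ᵐ y ∂ν, Tendsto (fun N => avg2 S T φ N y) atTop (nhds (F y)) := by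
  have hC0 := bdd_nonneg_of_prob ν hC
  obtain ⟨F1, -, hF1m, hF1b, -, hF1i, hF1l⟩ := birkhoff_bdd hS hφ hC
  obtain ⟨F2, -, hF2m, hF2b, -, hF2i, hF2l⟩ := birkhoff_bdd hT hF1m hF1b
  refine ⟨F2, hF2m, hF2b, hF2i.trans hF1i, ?_⟩
  obtain ⟨τ, hτm, hτ0, hτb, hτ, hτlim⟩ := exists_tail (ν := ν)
    (a := fun N y => avg N fun i => φ (S^[i] y)) (F := F1) (C := C + C)
    (fun N => measurable_avg (fun i => hφ.comp (hS.measurable.iterate i)) N) hF1m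
    (fun N y => (abs_sub _ _).trans (add_le_add (abs_avg_le_const hC0 fun i => hC _) (hF1b y))) hF1l
  choose E hE1 hE2 hE3 hE4 hE5 hE6 using fun n => birkhoff_bdd hT (hτm n) (hτb n)
  have hE0 : ∀ n, ∀ᵐ y ∂ν, 0 ≤ E n y := fun n => by
    filter_upwards [hE6 n] with y hy
    exact ge_of_tendsto' hy fun N => avg_nonneg fun i => hτ0 _ _
  have hsmall := ae_exists_lt_of_integral_tendsto_zero hE2 hE0
    (fun n => integrable_of_bdd (hE2 n) (hE3 n)) (by simp_rw [hE5]; exact hτlim)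
  filter_upwards [hF2l, ae_all_iff.2 hE6, hsmall] with y h1 h2 h3
  refine tendsto_of_approx fun δ hδ => ?_
  obtain ⟨n, hn⟩ := h3 (δ / 2) (by linarith)
  have a1 : ∀ᶠ N in atTop, (avg N fun i => τ n (T^[i] y)) < δ / 2 := (h2 n).eventually (gt_mem_nhds hn)
  have a2 : ∀ᶠ N in atTop, |(avg N fun i => F1 (T^[i] y)) - F2 y| < δ / 2 := by
    have := (Metric.tendsto_nhds.1 h1) (δ / 2) (by linarith)
    simpa [Real.dist_eq] using this
  filter_upwards [a1, a2, eventually_ge_atTop n] with N b1 b2 b3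
  have b4 : |avg2 S T φ N y - avg N fun j => F1 (T^[j] y)| ≤ avg N fun j => τ n (T^[j] y) := by
    unfold avg2
    rw [avg_comm, ← avg_sub]
    exact (abs_avg_le _ _).trans (avg_mono fun j => hτ n N _ b3)
  calc |avg2 S T φ N y - F2 y| ≤ |avg2 S T φ N y - avg N fun j => F1 (T^[j] y)| +
        |(avg N fun i => F1 (T^[i] y)) - F2 y| := abs_sub_le _ _ _
    _ ≤ δ := by linarith

lemma avg2_S_diff (S T : Y → Y) (hcomm : ∀ y, S (T y) = T (S y)) {φ : Y → ℝ} {C : ℝ}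
    (hC : ∀ y, |φ y| ≤ C) (hC0 : 0 ≤ C) (y : Y) (N : ℕ) :
    |avg2 S T φ N (S y) - avg2 S T φ N y| ≤ 2 * C * (1:ℕ) / N := by
  unfold avg2
  rw [abs_sub_comm, avg_comm, avg_comm N N fun i j => φ (S^[i] (T^[j] (S y))), ← avg_sub]
  refine abs_avg_le_const (by positivity) fun j => ?_
  have h1 := avg_shift_sub N 1 (fun i => φ (S^[i] (T^[j] y))) C fun i => hC _
  have hc : ∀ j, T^[j] (S y) = S (T^[j] y) := fun j =>
    ((Function.Commute.iterate_right (f := S) (g := T) hcomm j) y).symm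
  simpa only [hc, Function.iterate_succ_apply] using h1

lemma avg2_T_diff (S T : Y → Y) {φ : Y → ℝ} {C : ℝ}
    (hC : ∀ y, |φ y| ≤ C) (hC0 : 0 ≤ C) (y : Y) (N : ℕ) :
    |avg2 S T φ N (T y) - avg2 S T φ N y| ≤ 2 * C * (1:ℕ) / N := by
  unfold avg2
  rw [abs_sub_comm, ← avg_sub]
  refine abs_avg_le_const (by positivity) fun i => ?_
  have h1 := avg_shift_sub N 1 (fun j => φ (S^[i] (T^[j] y))) C fun i => hC _
  simpa only [Function.iterate_succ_apply] using h1

theorem ergodic2_const {S T : Y → Y} (hS : MeasurePreserving S ν ν) (hT : MeasurePreserving T ν ν)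
    (hcomm : ∀ y, S (T y) = T (S y))
    (herg : ∀ s : Set Y, MeasurableSet s → S ⁻¹' s = s → T ⁻¹' s = s → ν s = 0 ∨ ν s = 1)
    {φ : Y → ℝ} (hφ : Measurable φ) {C : ℝ} (hC : ∀ y, |φ y| ≤ C) :
    ∀ᵐ y ∂ν, Tendsto (fun N => avg2 S T φ N y) atTop (nhds (∫ y, φ y ∂ν)) := by
  have hC0 := bdd_nonneg_of_prob ν hC
  obtain ⟨F, hFm, hFb, hFi, hFl⟩ := ergodic2 hS hT hφ hC
  set c := ∫ y, φ y ∂ν with hc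
  have hFint : Integrable F ν := integrable_of_bdd hFm hFb
  set B := {y | FreqGt (fun N => avg2 S T φ N y) c} with hB
  have hBm : MeasurableSet B :=
    measurableSet_freqGt fun N => measurable_avg2 hS.measurable hT.measurable hφ N
  have hlim : Tendsto (fun N : ℕ => 2 * C * (1:ℕ) / (N:ℝ)) atTop (nhds 0) :=
    tendsto_const_div_atTop_nhds_zero_nat _
  have dS : ∀ y, Tendsto (fun N => avg2 S T φ N (S y) - avg2 S T φ N y) atTop (nhds 0) := fun y =>
    squeeze_zero_norm (fun N => avg2_S_diff S T hcomm hC hC0 y N) hlim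
  have dT : ∀ y, Tendsto (fun N => avg2 S T φ N (T y) - avg2 S T φ N y) atTop (nhds 0) := fun y =>
    squeeze_zero_norm (fun N => avg2_T_diff S T hC hC0 y N) hlim
  have iS : S ⁻¹' B = B := by
    ext y
    exact ⟨fun hy => FreqGt.congr hy (dS y), fun hy => FreqGt.congr hy (by simpa using (dS y).neg)⟩
  have iT : T ⁻¹' B = B := by
    ext y
    exact ⟨fun hy => FreqGt.congr hy (dT y), fun hy => FreqGt.congr hy (by simpa using (dT y).neg)⟩
  have hle : ∀ᵐ y ∂ν, F y ≤ c := by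
    rcases herg B hBm iS iT with h | h
    · filter_upwards [measure_eq_zero_iff_ae_notMem.1 h, hFl] with y h1 h2
      by_contra h3
      exact h1 (FreqGt.of_tendsto h2 (not_le.1 h3))
    · have h1 : ∀ᵐ y ∂ν, c < F y := by
        have : ∀ᵐ y ∂ν, y ∈ B := (mem_ae_iff_prob_eq_one hBm).2 h
        filter_upwards [this, hFl] with y h1 h2
        exact FreqGt.lt_of_tendsto h2 h1
      exfalso
      have h2 : 0 < ∫ y, (F y - c) ∂ν := by
        rw [integral_pos_iff_support_of_nonneg_ae]
        · have : ν (Function.support fun y => F y - c) = 1 := by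
            rw [← mem_ae_iff_prob_eq_one₀]
            · filter_upwards [h1] with y hy
              simp only [Function.mem_support]
              linarith
            · exact (measurableSet_support (hFm.sub measurable_const)).nullMeasurableSet
          rw [this]; exact one_pos
        · filter_upwards [h1] with y hy
          simp only [Pi.zero_apply]; linarith
        · exact hFint.sub (integrable_const c)
      rw [integral_sub hFint (integrable_const c), hFi] at h2
      simp at h2
  have h0 : ∫ y, (c - F y) ∂ν = 0 := by
    rw [integral_sub (integrable_const c) hFint, hFi]; simp
  rw [integral_eq_zero_iff_of_nonneg_ae] at h0
  · filter_upwards [h0, hFl] with y h1 h2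
    have : c = F y := by simp only [Pi.zero_apply] at h1; linarith
    rw [this]; exact h2
  · filter_upwards [hle] with y hy
    simp only [Pi.zero_apply]; linarith
  · exact (integrable_const c).sub hFint

/-- mean ergodic theorem, weak form -/
lemma mean_ergodic_mul {R : Y → Y} (hR : MeasurePreserving R ν ν) {f g : Y → ℝ} (hf : Measurable f)
    (hg : Measurable g) {C D : ℝ} (hC : ∀ y, |f y| ≤ C) (hD : ∀ y, |g y| ≤ D) :
    Tendsto (fun N => ∫ y, g y * avg N (fun i => f (R^[i] y)) ∂ν) atTop
      (nhds (∫ y, g y * (ν[f | invSigma R]) y ∂ν)) := by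
  have hC0 := bdd_nonneg_of_prob ν hC
  have hD0 := bdd_nonneg_of_prob ν hD
  refine tendsto_integral_of_dominated_convergence (fun _ => D * C)
    (fun n => (hg.mul (measurable_avg (fun i => hf.comp (hR.measurable.iterate i)) n)).aestronglyMeasurable)
    (integrable_const _) (fun n => Eventually.of_forall fun y => ?_) ?_
  · rw [Real.norm_eq_abs, abs_mul]
    exact mul_le_mul (hD y) (abs_avg_le_const hC0 fun i => hC _) (abs_nonneg _) hD0
  · filter_upwards [birkhoff_condExp hR hf hC] with y hy
    exact hy.const_mul _

/-- mean ergodic theorem, convergence of norms -/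
lemma mean_ergodic_sq {R : Y → Y} (hR : MeasurePreserving R ν ν) {f : Y → ℝ} (hf : Measurable f)
    {C : ℝ} (hC : ∀ y, |f y| ≤ C) :
    Tendsto (fun N => ∫ y, (avg N (fun i => f (R^[i] y))) ^ 2 ∂ν) atTop
      (nhds (∫ y, ((ν[f | invSigma R]) y) ^ 2 ∂ν)) := by
  have hC0 := bdd_nonneg_of_prob ν hC
  refine tendsto_integral_of_dominated_convergence (fun _ => C ^ 2)
    (fun n => ((measurable_avg (fun i => hf.comp (hR.measurable.iterate i)) n).pow_const 2).aestronglyMeasurable)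
    (integrable_const _) (fun n => Eventually.of_forall fun y => ?_) ?_
  · rw [Real.norm_eq_abs, abs_pow]
    exact pow_le_pow_left₀ (abs_nonneg _) (abs_avg_le_const hC0 fun i => hC _) 2
  · filter_upwards [birkhoff_condExp hR hf hC] with y hy
    exact hy.pow 2

/-- conditional expectation on invariants commutes with commuting maps -/
lemma condExp_comp_commute {R Q : Y → Y} (hR : MeasurePreserving R ν ν) (hQ : MeasurePreserving Q ν ν)
    (hcomm : ∀ y, R (Q y) = Q (R y)) {f : Y → ℝ} (hf : Measurable f)
    {C : ℝ} (hC : ∀ y, |f y| ≤ C) :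
    ν[fun y => f (Q y) | invSigma R] =ᵐ[ν] fun y => (ν[f | invSigma R]) (Q y) := by
  have h1 := hQ.quasiMeasurePreserving.ae (birkhoff_condExp hR hf hC)
  filter_upwards [h1, birkhoff_condExp hR (hf.comp hQ.measurable) (C := C) fun y => hC _] with y h1 h2
  refine tendsto_nhds_unique h2 ?_
  convert h1 using 4 with N i
  have : Function.Commute R Q := hcomm
  exact congrArg f ((this.iterate_left i) y).symm

end ergodic2
open MeasureTheory Filter
set_option linter.unusedSectionVars false

section osc

/-- index set of triples -/
def idx (n : ℕ) : Set (ℕ × ℕ × ℕ) := {q | n ≤ q.2.1 ∧ n ≤ q.2.2 ∧ q.2.1 ≤ q.1 ∧ q.2.2 ≤ q.1}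

lemma idx_anti {m n : ℕ} (h : m ≤ n) {q : ℕ × ℕ × ℕ} (hq : q ∈ idx n) : q ∈ idx m :=
  ⟨h.trans hq.1, h.trans hq.2.1, hq.2.2.1, hq.2.2.2⟩

lemma idx_diag (n : ℕ) : (n, n, n) ∈ idx n := ⟨le_refl _, le_refl _, le_refl _, le_refl _⟩

lemma idx_le {n : ℕ} {q : ℕ × ℕ × ℕ} (hq : q ∈ idx n) : n ≤ q.1 := hq.1.trans hq.2.2.1

/-- supremum of differences over the index set -/
noncomputable def oscAt (a : ℕ × ℕ × ℕ → ℝ) (n : ℕ) : ENNReal :=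
  ⨆ q : ℕ × ℕ × ℕ, ⨆ q' : ℕ × ℕ × ℕ, ⨆ _ : q ∈ idx n, ⨆ _ : q' ∈ idx n, ENNReal.ofReal |a q - a q'|

/-- asymptotic oscillation -/
noncomputable def osc (a : ℕ × ℕ × ℕ → ℝ) : ENNReal := ⨅ n, oscAt a n

lemma oscAt_le {a : ℕ × ℕ × ℕ → ℝ} {n : ℕ} {c : ENNReal}
    (h : ∀ q ∈ idx n, ∀ q' ∈ idx n, ENNReal.ofReal |a q - a q'| ≤ c) : oscAt a n ≤ c :=
  iSup_le fun q => iSup_le fun q' => iSup_le fun hq => iSup_le fun hq' => h q hq q' hq'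

lemma le_oscAt (a : ℕ × ℕ × ℕ → ℝ) {n : ℕ} {q q' : ℕ × ℕ × ℕ} (hq : q ∈ idx n) (hq' : q' ∈ idx n) :
    ENNReal.ofReal |a q - a q'| ≤ oscAt a n :=
  le_iSup_of_le q (le_iSup_of_le q' (le_iSup_of_le hq (le_iSup_of_le hq' le_rfl)))

lemma osc_le_add {a b : ℕ × ℕ × ℕ → ℝ} {d : ℝ}
    (h : ∀ ε > 0, ∃ n, ∀ q ∈ idx n, |a q - b q| ≤ d + ε) :
    osc a ≤ osc b + ENNReal.ofReal (2 * d) := by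
  have hd : 0 ≤ d := by
    refine le_of_forall_pos_le_add fun ε hε => ?_
    obtain ⟨n, hn⟩ := h ε hε
    exact (abs_nonneg _).trans (hn _ (idx_diag n))
  unfold osc
  rw [ENNReal.iInf_add]
  refine le_iInf fun m => ?_
  refine ENNReal.le_of_forall_pos_le_add fun ε hε _ => ?_
  have hε' : (0:ℝ) < ε := hε
  obtain ⟨n, hn⟩ := h (ε / 2) (by positivity)
  refine (iInf_le _ (max m n)).trans (oscAt_le fun q hq q' hq' => ?_)
  have h1 := hn q (idx_anti (le_max_right _ _) hq)
  have h2 := hn q' (idx_anti (le_max_right _ _) hq')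
  have h3 := le_oscAt b (idx_anti (le_max_left m n) hq) (idx_anti (le_max_left m n) hq')
  have h4 : |a q - a q'| ≤ |b q - b q'| + 2 * d + ε := by
    rw [abs_le] at *
    have := abs_le.1 (le_refl |b q - b q'|)
    constructor <;> linarith [h1.1, h1.2, h2.1, h2.2, this.1, this.2]
  calc ENNReal.ofReal |a q - a q'| ≤ ENNReal.ofReal (|b q - b q'| + 2 * d + ε) := ENNReal.ofReal_le_ofReal h4
    _ = ENNReal.ofReal |b q - b q'| + ENNReal.ofReal (2 * d) + ε := by
        rw [ENNReal.ofReal_add (by positivity) hε'.le, ENNReal.ofReal_add (by positivity) (by positivity),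
          ENNReal.ofReal_coe_nnreal]
    _ ≤ _ := by gcongr

/-- Cauchy along the index sets -/
def Cau (a : ℕ × ℕ × ℕ → ℝ) : Prop := ∀ ε > 0, ∃ n, ∀ q ∈ idx n, ∀ q' ∈ idx n, |a q - a q'| ≤ ε

lemma osc_eq_zero_iff {a : ℕ × ℕ × ℕ → ℝ} : osc a = 0 ↔ Cau a := by
  constructor
  · intro h ε hε
    have h1 : osc a < ENNReal.ofReal ε := by rw [h]; exact ENNReal.ofReal_pos.2 hε
    obtain ⟨n, hn⟩ := iInf_lt_iff.1 h1
    refine ⟨n, fun q hq q' hq' => ?_⟩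
    exact (ENNReal.ofReal_le_ofReal_iff hε.le).1 ((le_oscAt a hq hq').trans hn.le)
  · intro h
    refine le_antisymm (ENNReal.le_of_forall_pos_le_add fun ε hε _ => ?_) bot_le
    obtain ⟨n, hn⟩ := h ε hε
    refine (iInf_le _ n).trans (oscAt_le fun q hq q' hq' => ?_)
    rw [zero_add, ← ENNReal.ofReal_coe_nnreal]
    exact ENNReal.ofReal_le_ofReal (hn q hq q' hq')

lemma Cau.add {a b : ℕ × ℕ × ℕ → ℝ} (ha : Cau a) (hb : Cau b) : Cau fun q => a q + b q := by
  intro ε hε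
  obtain ⟨n, hn⟩ := ha (ε / 2) (by positivity)
  obtain ⟨m, hm⟩ := hb (ε / 2) (by positivity)
  refine ⟨max n m, fun q hq q' hq' => ?_⟩
  have h1 := hn q (idx_anti (le_max_left _ _) hq) q' (idx_anti (le_max_left _ _) hq')
  have h2 := hm q (idx_anti (le_max_right _ _) hq) q' (idx_anti (le_max_right _ _) hq')
  rw [abs_le] at *
  constructor <;> linarith [h1.1, h1.2, h2.1, h2.2]

lemma Cau.mul_left {a : ℕ × ℕ × ℕ → ℝ} (ha : Cau a) (c : ℝ) : Cau fun q => c * a q := by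
  intro ε hε
  obtain ⟨n, hn⟩ := ha (ε / (|c| + 1)) (by positivity)
  refine ⟨n, fun q hq q' hq' => ?_⟩
  rw [← mul_sub, abs_mul]
  calc |c| * |a q - a q'| ≤ (|c| + 1) * (ε / (|c| + 1)) := by
        gcongr
        · linarith
        · exact hn q hq q' hq'
    _ = ε := by field_simp

lemma Cau.of_tendsto {u : ℕ → ℝ} {l : ℝ} (h : Tendsto u atTop (nhds l)) : Cau fun q => u q.1 := by
  intro ε hε
  obtain ⟨n, hn⟩ := Metric.tendsto_atTop.1 h (ε / 2) (by positivity)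
  refine ⟨n, fun q hq q' hq' => ?_⟩
  have h1 := (hn q.1 (idx_le hq)).le
  have h2 := (hn q'.1 (idx_le hq')).le
  rw [Real.dist_eq] at h1 h2
  rw [abs_le] at *
  constructor <;> linarith [h1.1, h1.2, h2.1, h2.2]

end osc

section structured

variable {Y : Type*} [MeasurableSpace Y] {ν : Measure Y} [IsProbabilityMeasure ν]

lemma measurable_osc {A : ℕ × ℕ × ℕ → Y → ℝ} (hA : ∀ q, Measurable (A q)) :
    Measurable fun y => osc fun q => A q y := by
  unfold osc oscAt
  refine Measurable.iInf fun n => Measurable.iSup fun q => Measurable.iSup fun q' =>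
    Measurable.iSup fun _ => Measurable.iSup fun _ => ?_
  exact (((hA q).sub (hA q')).abs).ennreal_ofReal

lemma lintegral_osc_le {A B : ℕ × ℕ × ℕ → Y → ℝ} {D : Y → ℝ} (hDm : Measurable D) (hD : Integrable D ν)
    (h : ∀ᵐ y ∂ν, ∀ ε > 0, ∃ n, ∀ q ∈ idx n, |A q y - B q y| ≤ D y + ε) :
    ∫⁻ y, osc (fun q => A q y) ∂ν ≤ ∫⁻ y, osc (fun q => B q y) ∂ν + ENNReal.ofReal (2 * ∫ y, D y ∂ν) := by
  have hD0 : 0 ≤ᵐ[ν] D := by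
    filter_upwards [h] with y hy
    refine le_of_forall_pos_le_add fun ε hε => ?_
    obtain ⟨n, hn⟩ := hy ε hε
    exact (abs_nonneg _).trans (hn _ (idx_diag n))
  rw [← integral_const_mul, ofReal_integral_eq_lintegral_ofReal (hD.const_mul 2)
    (by filter_upwards [hD0] with y hy; simp only [Pi.zero_apply] at *; positivity),
    ← lintegral_add_right _ (hDm.const_mul 2).ennreal_ofReal]
  refine lintegral_mono_ae ?_
  filter_upwards [h] with y hy
  exact osc_le_add hy

/-- the four-fold average -/
noncomputable def A4 (S T : Y → Y) (f0 f1 f2 f3 : Y → ℝ) (q : ℕ × ℕ × ℕ) (y : Y) : ℝ :=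
  arr (fun i j => f0 (S^[i] (T^[j] y))) (fun i j => f1 (S^[i] (T^[j] y)))
    (fun i j => f2 (S^[i] (T^[j] y))) (fun i j => f3 (S^[i] (T^[j] y))) q

variable {S T : Y → Y} {f0 f1 f2 : Y → ℝ}

lemma measurable_A4 (hS : Measurable S) (hT : Measurable T) {f3 : Y → ℝ} (h0 : Measurable f0)
    (h1 : Measurable f1) (h2 : Measurable f2) (h3 : Measurable f3) (q : ℕ × ℕ × ℕ) :
    Measurable (A4 S T f0 f1 f2 f3 q) := by
  have hh : ∀ {f : Y → ℝ}, Measurable f → ∀ i j, Measurable fun y => f (S^[i] (T^[j] y)) :=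
    fun hf i j => hf.comp ((hS.iterate i).comp (hT.iterate j))
  refine measurable_avg (fun i => measurable_avg (fun j => measurable_avg (fun k =>
    measurable_avg (fun p => ?_) _) _) _) _
  exact (((hh h0 _ _).mul (hh h1 _ _)).mul (hh h2 _ _)).mul (hh h3 _ _)

lemma A4_add (f g : Y → ℝ) (q : ℕ × ℕ × ℕ) (y : Y) :
    A4 S T f0 f1 f2 (fun y => f y + g y) q y = A4 S T f0 f1 f2 f q y + A4 S T f0 f1 f2 g q y := by
  simp only [A4, arr, mul_add, avg_add]

lemma A4_smul (c : ℝ) (f : Y → ℝ) (q : ℕ × ℕ × ℕ) (y : Y) :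
    A4 S T f0 f1 f2 (fun y => c * f y) q y = c * A4 S T f0 f1 f2 f q y := by
  simp only [A4, arr, ← avg_mul_left]
  simp only [mul_left_comm _ c]

lemma lintegral_osc_A4_L1 (hS : MeasurePreserving S ν ν) (hT : MeasurePreserving T ν ν)
    (b0 : ∀ y, |f0 y| ≤ 1) (b1 : ∀ y, |f1 y| ≤ 1) (b2 : ∀ y, |f2 y| ≤ 1) {f g : Y → ℝ}
    (hf : Measurable f) (hg : Measurable g) {C : ℝ} (hC : ∀ y, |f y - g y| ≤ C) :
    ∫⁻ y, osc (fun q => A4 S T f0 f1 f2 f q y) ∂ν ≤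
      ∫⁻ y, osc (fun q => A4 S T f0 f1 f2 g q y) ∂ν + ENNReal.ofReal (8 * ∫ y, |f y - g y| ∂ν) := by
  obtain ⟨F, hFm, hFb, hFi, hFl⟩ := ergodic2 hS hT (hf.sub hg).abs (C := C) fun y => by
    rw [abs_abs]; exact hC y
  have key := lintegral_osc_le (ν := ν) (A := A4 S T f0 f1 f2 f) (B := A4 S T f0 f1 f2 g)
    (D := fun y => 4 * F y) (hFm.const_mul 4) ((integrable_of_bdd hFm hFb).const_mul 4) ?_
  · rw [integral_const_mul, hFi, ← mul_assoc] at key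
    norm_num at key ⊢
    exact key
  · filter_upwards [hFl] with y hy ε hε
    obtain ⟨n, hn⟩ := Metric.tendsto_atTop.1 hy (ε / 4) (by positivity)
    refine ⟨n, fun q hq => ?_⟩
    have h1 : A4 S T f0 f1 f2 f q y - A4 S T f0 f1 f2 g q y = A4 S T f0 f1 f2 (fun y => f y - g y) q y := by
      simp only [A4, arr, mul_sub, avg_sub]
    rw [h1]
    have h2 := hn (2 * q.1) (by linarith [idx_le hq])
    have h3 := arr_L1 (u0 := fun i j => f0 (S^[i] (T^[j] y))) (u1 := fun i j => f1 (S^[i] (T^[j] y)))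
      (u2 := fun i j => f2 (S^[i] (T^[j] y))) (u3 := fun i j => f (S^[i] (T^[j] y)) - g (S^[i] (T^[j] y)))
      (fun _ _ => b0 _) (fun _ _ => b1 _) (fun _ _ => b2 _) hq.2.2.1 hq.2.2.2
    have h4 := (abs_lt.1 h2).2
    unfold avg2 at h4
    refine h3.trans ?_
    simp only [Pi.sub_apply] at h4
    linarith

lemma iter_comm (hcomm : ∀ y, S (T y) = T (S y)) (i j : ℕ) (y : Y) :
    S^[i] (T^[j] y) = T^[j] (S^[i] y) :=
  (Function.Commute.iterate_iterate (f := S) (g := T) hcomm i j) y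

lemma A4_one (hcomm : ∀ y, S (T y) = T (S y)) (q : ℕ × ℕ × ℕ) (y : Y) :
    A4 S T f0 f1 f2 (fun _ => 1) q y = avg2 S T (fun z => f0 z * (avg q.2.1 fun k => f1 (S^[k] z)) *
      (avg q.2.2 fun p => f2 (T^[p] z))) q.1 y := by
  unfold A4 arr avg2
  congr 1; ext i; congr 1; ext j
  beta_reduce
  rw [mul_assoc (f0 _) (avg _ _) (avg _ _), avg_mul_avg, ← avg_mul_left]
  congr 1; ext k; rw [← avg_mul_left]
  congr 1; ext p
  rw [add_comm i k, add_comm j p, Function.iterate_add_apply, Function.iterate_add_apply T,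
    iter_comm hcomm i p]
  ring

lemma cau_one (hS : MeasurePreserving S ν ν) (hT : MeasurePreserving T ν ν)
    (hcomm : ∀ y, S (T y) = T (S y)) (h0 : Measurable f0) (h1 : Measurable f1) (h2 : Measurable f2)
    (b0 : ∀ y, |f0 y| ≤ 1) (b1 : ∀ y, |f1 y| ≤ 1) (b2 : ∀ y, |f2 y| ≤ 1) :
    ∀ᵐ y ∂ν, Cau fun q => A4 S T f0 f1 f2 (fun _ => 1) q y := by
  obtain ⟨F, -, hFm, hFb, -, -, hFl⟩ := birkhoff_bdd hS h1 b1
  obtain ⟨G, -, hGm, hGb, -, -, hGl⟩ := birkhoff_bdd hT h2 b2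
  have hPm : ∀ N, Measurable fun y => avg N fun i => f1 (S^[i] y) := fun N =>
    measurable_avg (fun i => h1.comp (hS.measurable.iterate i)) N
  have hQm : ∀ N, Measurable fun y => avg N fun i => f2 (T^[i] y) := fun N =>
    measurable_avg (fun i => h2.comp (hT.measurable.iterate i)) N
  have hPb : ∀ N y, |avg N fun i => f1 (S^[i] y)| ≤ 1 := fun N y =>
    abs_avg_le_const zero_le_one fun i => b1 _
  have hQb : ∀ N y, |avg N fun i => f2 (T^[i] y)| ≤ 1 := fun N y =>
    abs_avg_le_const zero_le_one fun i => b2 _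
  obtain ⟨τ, hτm, hτ0, hτb, hτ, hτl⟩ := exists_tail (ν := ν) hPm hFm (C := 2)
    (fun N y => (abs_sub _ _).trans (by linarith [hPb N y, hFb y])) hFl
  obtain ⟨ρ, hρm, hρ0, hρb, hρ, hρl⟩ := exists_tail (ν := ν) hQm hGm (C := 2)
    (fun N y => (abs_sub _ _).trans (by linarith [hQb N y, hGb y])) hGl
  obtain ⟨Z, -, -, -, hZl⟩ := ergodic2 (ν := ν) hS hT ((h0.mul hFm).mul hGm) (C := 1) fun y =>
    abs_mul_le_one (abs_mul_le_one (b0 y) (hFb y)) (hGb y)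
  have hB : ∫⁻ y, osc (fun q : ℕ × ℕ × ℕ => avg2 S T (fun y => f0 y * F y * G y) q.1 y) ∂ν = 0 := by
    rw [← lintegral_zero (μ := ν)]
    refine lintegral_congr_ae ?_
    filter_upwards [hZl] with y hy
    exact osc_eq_zero_iff.2 (Cau.of_tendsto hy)
  have key : ∀ n, ∫⁻ y, osc (fun q => A4 S T f0 f1 f2 (fun _ => 1) q y) ∂ν ≤
      ENNReal.ofReal (2 * (∫ y, τ n y ∂ν + ∫ y, ρ n y ∂ν)) := by
    intro n
    obtain ⟨E, hEm, hEb, hEi, hEl⟩ := ergodic2 (ν := ν) hS hT ((hτm n).add (hρm n)) (C := 4) fun y =>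
      (abs_add_le _ _).trans (by linarith [hτb n y, hρb n y])
    have := lintegral_osc_le (ν := ν) (A := A4 S T f0 f1 f2 (fun _ => 1))
      (B := fun q y => avg2 S T (fun y => f0 y * F y * G y) q.1 y) hEm (integrable_of_bdd hEm hEb) ?_
    · rw [hB, zero_add, hEi] at this
      simp only [Pi.add_apply] at this
      rwa [integral_add (integrable_of_bdd (hτm n) (hτb n)) (integrable_of_bdd (hρm n) (hρb n))] at this
    · filter_upwards [hEl] with y hy ε hε
      obtain ⟨m, hm⟩ := Metric.tendsto_atTop.1 hy ε hε
      refine ⟨max n m, fun q hq => ?_⟩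
      have h4 := (abs_lt.1 (hm q.1 ((le_max_right _ _).trans (idx_le hq)))).2
      refine le_trans ?_ (by linarith : avg2 S T (τ n + ρ n) q.1 y ≤ _)
      rw [A4_one hcomm]
      unfold avg2
      rw [← avg_sub]
      refine (abs_avg_le _ _).trans (avg_mono fun i => ?_)
      rw [← avg_sub]
      refine (abs_avg_le _ _).trans (avg_mono fun j => ?_)
      set z := S^[i] (T^[j] y)
      have e1 := hτ n q.2.1 z ((le_max_left _ _).trans hq.1)
      have e2 := hρ n q.2.2 z ((le_max_left _ _).trans hq.2.1)
      rw [Pi.add_apply]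
      refine le_trans ?_ (add_le_add e1 e2)
      set a := avg q.2.1 fun i => f1 (S^[i] z)
      set b := avg q.2.2 fun i => f2 (T^[i] z)
      have : f0 z * a * b - f0 z * F z * G z = f0 z * b * (a - F z) + f0 z * F z * (b - G z) := by ring
      rw [this]
      refine (abs_add_le _ _).trans ?_
      rw [abs_mul, abs_mul (f0 z * F z)]
      gcongr
      · exact mul_le_of_le_one_left (abs_nonneg _) (abs_mul_le_one (b0 _) (hQb _ _))
      · exact mul_le_of_le_one_left (abs_nonneg _) (abs_mul_le_one (b0 _) (hFb _))
  have hlim : Tendsto (fun n => ENNReal.ofReal (2 * (∫ y, τ n y ∂ν + ∫ y, ρ n y ∂ν))) atTop (nhds 0) := by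
    have := ENNReal.tendsto_ofReal ((hτl.add hρl).const_mul 2)
    simpa using this
  have h00 := le_antisymm (ge_of_tendsto' hlim key) bot_le
  rw [lintegral_eq_zero_iff (measurable_osc fun q =>
    measurable_A4 hS.measurable hT.measurable h0 h1 h2 measurable_const q)] at h00
  filter_upwards [h00] with y hy
  exact osc_eq_zero_iff.1 hy

end structured
open MeasureTheory Filter
set_option linter.unusedSectionVars false

section structured2

variable {Y : Type*} [MeasurableSpace Y] {ν : Measure Y} [IsProbabilityMeasure ν]
  {S T : Y → Y} {f0 f1 f2 : Y → ℝ}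

/-- functions for which the four-fold average is a.e. Cauchy -/
def Good (ν : Measure Y) (S T : Y → Y) (f0 f1 f2 f : Y → ℝ) : Prop :=
  Measurable f ∧ (∃ C, ∀ y, |f y| ≤ C) ∧ ∀ᵐ y ∂ν, Cau fun q => A4 S T f0 f1 f2 f q y

lemma Good.add {f g : Y → ℝ} (hf : Good ν S T f0 f1 f2 f) (hg : Good ν S T f0 f1 f2 g) :
    Good ν S T f0 f1 f2 (fun y => f y + g y) := by
  obtain ⟨h1, ⟨C, hC⟩, h2⟩ := hf
  obtain ⟨h1', ⟨C', hC'⟩, h2'⟩ := hg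
  refine ⟨h1.add h1', ⟨C + C', fun y => (abs_add_le _ _).trans (add_le_add (hC y) (hC' y))⟩, ?_⟩
  filter_upwards [h2, h2'] with y hy hy'
  simp only [A4_add]
  exact hy.add hy'

lemma Good.smul {f : Y → ℝ} (hf : Good ν S T f0 f1 f2 f) (c : ℝ) :
    Good ν S T f0 f1 f2 (fun y => c * f y) := by
  obtain ⟨h1, ⟨C, hC⟩, h2⟩ := hf
  refine ⟨h1.const_mul c, ⟨|c| * C, fun y => ?_⟩, ?_⟩
  · rw [abs_mul]; exact mul_le_mul_of_nonneg_left (hC y) (abs_nonneg _)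
  filter_upwards [h2] with y hy
  simp only [A4_smul]
  exact hy.mul_left c

lemma Good.zero : Good ν S T f0 f1 f2 (fun _ => 0) := by
  refine ⟨measurable_const, ⟨0, by simp⟩, Eventually.of_forall fun y => ?_⟩
  have : (fun q => A4 S T f0 f1 f2 (fun _ => 0) q y) = fun _ => 0 := by
    ext q
    simp [A4, arr, avg]
  rw [this]
  intro ε hε
  exact ⟨0, by simp [hε.le]⟩

lemma Good.sum {ι : Type*} (s : Finset ι) {f : ι → Y → ℝ} (hf : ∀ i ∈ s, Good ν S T f0 f1 f2 (f i)) :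
    Good ν S T f0 f1 f2 (fun y => ∑ i ∈ s, f i y) := by
  classical
  induction s using Finset.induction_on with
  | empty => simpa using Good.zero
  | insert a s ha ih =>
    simp only [Finset.sum_insert ha]
    exact (hf a (Finset.mem_insert_self _ _)).add (ih fun i hi => hf i (Finset.mem_insert_of_mem hi))

lemma Good.of_L1 (hS : MeasurePreserving S ν ν) (hT : MeasurePreserving T ν ν)
    (h0 : Measurable f0) (h1 : Measurable f1) (h2 : Measurable f2)
    (b0 : ∀ y, |f0 y| ≤ 1) (b1 : ∀ y, |f1 y| ≤ 1) (b2 : ∀ y, |f2 y| ≤ 1) {f : Y → ℝ}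
    (hf : Measurable f) {C : ℝ} (hC : ∀ y, |f y| ≤ C)
    (h : ∀ ε > 0, ∃ g, Good ν S T f0 f1 f2 g ∧ ∫ y, |f y - g y| ∂ν ≤ ε) : Good ν S T f0 f1 f2 f := by
  refine ⟨hf, ⟨C, hC⟩, ?_⟩
  have key : ∫⁻ y, osc (fun q => A4 S T f0 f1 f2 f q y) ∂ν = 0 := by
    refine le_antisymm (ENNReal.le_of_forall_pos_le_add fun ε hε _ => ?_) bot_le
    have hε' : (0:ℝ) < ε := hε
    obtain ⟨g, ⟨hg, ⟨D, hD⟩, hgl⟩, hi⟩ := h (ε / 8) (by positivity)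
    have h3 := lintegral_osc_A4_L1 hS hT b0 b1 b2 hf hg (C := C + D) fun y =>
      (abs_sub _ _).trans (add_le_add (hC y) (hD y))
    have h4 : ∫⁻ y, osc (fun q => A4 S T f0 f1 f2 g q y) ∂ν = 0 := by
      rw [← lintegral_zero (μ := ν)]
      refine lintegral_congr_ae ?_
      filter_upwards [hgl] with y hy
      exact osc_eq_zero_iff.2 hy
    rw [h4] at h3
    refine h3.trans ?_
    gcongr
    rw [← ENNReal.ofReal_coe_nnreal]
    exact ENNReal.ofReal_le_ofReal (by linarith)
  rw [lintegral_eq_zero_iff (measurable_osc fun q =>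
    measurable_A4 hS.measurable hT.measurable h0 h1 h2 hf q)] at key
  filter_upwards [key] with y hy
  exact osc_eq_zero_iff.1 hy

lemma ind_abs_le (E : Set Y) (y : Y) : |E.indicator (fun _ => (1:ℝ)) y| ≤ 1 := by
  by_cases h : y ∈ E <;> simp [h]

lemma good_inter (hS : MeasurePreserving S ν ν) (hT : MeasurePreserving T ν ν)
    (hcomm : ∀ y, S (T y) = T (S y)) (h0 : Measurable f0) (h1 : Measurable f1) (h2 : Measurable f2)
    (b0 : ∀ y, |f0 y| ≤ 1) (b1 : ∀ y, |f1 y| ≤ 1) (b2 : ∀ y, |f2 y| ≤ 1)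
    {A B : Set Y} (hA : MeasurableSet[invSigma S] A) (hB : MeasurableSet[invSigma T] B) :
    Good ν S T f0 f1 f2 ((A ∩ B).indicator fun _ => 1) := by
  refine ⟨measurable_const.indicator (hA.1.inter hB.1), ⟨1, ind_abs_le _⟩, ?_⟩
  have := cau_one hS hT hcomm h0 (h1.mul ((measurable_const (a := (1:ℝ))).indicator hB.1))
    (h2.mul ((measurable_const (a := (1:ℝ))).indicator hA.1)) b0
    (fun y => abs_mul_le_one (b1 y) (ind_abs_le _ _)) (fun y => abs_mul_le_one (b2 y) (ind_abs_le _ _))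
  filter_upwards [this] with y hy
  convert hy using 2 with q
  unfold A4 arr
  congr 1; ext i; congr 1; ext j; congr 1; ext k; congr 1; ext p
  have eA : A.indicator (fun _ => (1:ℝ)) (S^[i + k] (T^[j+p] y)) =
      A.indicator (fun _ => (1:ℝ)) (S^[i] (T^[j+p] y)) := by
    rw [add_comm, Function.iterate_add_apply]
    exact iterate_eq_of_invSigma (Measurable.indicator (m := invSigma S) measurable_const hA) _ _
  have eB : B.indicator (fun _ => (1:ℝ)) (S^[i + k] (T^[j+p] y)) =
      B.indicator (fun _ => (1:ℝ)) (S^[i+k] (T^[j] y)) := by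
    rw [add_comm j p, Function.iterate_add_apply T, iter_comm hcomm (i+k) p]
    exact iterate_eq_of_invSigma (Measurable.indicator (m := invSigma T) measurable_const hB) _ _
  have : ∀ z, (A ∩ B).indicator (fun _ => (1:ℝ)) z = A.indicator (fun _ => (1:ℝ)) z * B.indicator (fun _ => (1:ℝ)) z := by
    intro z
    by_cases h : z ∈ A <;> by_cases h' : z ∈ B <;> simp [h, h']
  beta_reduce
  rw [this, eA, eB]
  simp only [Pi.mul_apply]
  ring

lemma sup_le_ambient (S T : Y → Y) : invSigma S ⊔ invSigma T ≤ ‹MeasurableSpace Y› :=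
  sup_le (invSigma_le S) (invSigma_le T)

lemma sup_eq_generate (S T : Y → Y) : invSigma S ⊔ invSigma T = MeasurableSpace.generateFrom
    {E | ∃ A B, MeasurableSet[invSigma S] A ∧ MeasurableSet[invSigma T] B ∧ E = A ∩ B} := by
  apply le_antisymm
  · refine sup_le (fun A hA => ?_) (fun B hB => ?_)
    · exact MeasurableSpace.measurableSet_generateFrom ⟨A, Set.univ, hA, MeasurableSet.univ, by simp⟩
    · exact MeasurableSpace.measurableSet_generateFrom ⟨Set.univ, B, MeasurableSet.univ, hB, by simp⟩
  · refine MeasurableSpace.generateFrom_le ?_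
    rintro E ⟨A, B, hA, hB, rfl⟩
    exact MeasurableSet.inter (le_sup_left (a := invSigma S) _ hA) (le_sup_right (b := invSigma T) _ hB)

lemma good_set (hS : MeasurePreserving S ν ν) (hT : MeasurePreserving T ν ν)
    (hcomm : ∀ y, S (T y) = T (S y)) (h0 : Measurable f0) (h1 : Measurable f1) (h2 : Measurable f2)
    (b0 : ∀ y, |f0 y| ≤ 1) (b1 : ∀ y, |f1 y| ≤ 1) (b2 : ∀ y, |f2 y| ≤ 1)
    {E : Set Y} (hE : MeasurableSet[invSigma S ⊔ invSigma T] E) :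
    Good ν S T f0 f1 f2 (E.indicator fun _ => 1) := by
  have hone : Good ν S T f0 f1 f2 (fun _ => 1) := by
    simpa using good_inter (ν := ν) hS hT hcomm h0 h1 h2 b0 b1 b2
      (MeasurableSet.univ : MeasurableSet[invSigma S] _) (MeasurableSet.univ : MeasurableSet[invSigma T] _)
  refine MeasurableSpace.induction_on_inter (m := invSigma S ⊔ invSigma T)
    (C := fun E _ => Good ν S T f0 f1 f2 (E.indicator fun _ => 1)) (sup_eq_generate S T) ?_ ?_ ?_ ?_ ?_ E hE
  · rintro _ ⟨A, B, hA, hB, rfl⟩ _ ⟨A', B', hA', hB', rfl⟩ -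
    exact ⟨A ∩ A', B ∩ B', hA.inter hA', hB.inter hB', Set.inter_inter_inter_comm _ _ _ _⟩
  · simpa using Good.zero
  · rintro _ ⟨A, B, hA, hB, rfl⟩
    exact good_inter hS hT hcomm h0 h1 h2 b0 b1 b2 hA hB
  · intro t ht h
    convert hone.add (h.smul (-1)) using 2 with y
    by_cases hy : y ∈ t <;> simp [hy]
  · intro t hd htm ht
    have htm' : ∀ i, MeasurableSet (t i) := fun i => sup_le_ambient S T _ (htm i)
    refine Good.of_L1 hS hT h0 h1 h2 b0 b1 b2
      (measurable_const.indicator (MeasurableSet.iUnion htm')) (ind_abs_le _) fun ε hε => ?_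
    have hlim : Tendsto (fun n => ∫ y, |(⋃ i, t i).indicator (fun _ => (1:ℝ)) y -
        ∑ i ∈ Finset.range n, (t i).indicator (fun _ => (1:ℝ)) y| ∂ν) atTop (nhds (∫ y, (0:ℝ) ∂ν)) := by
      have hs : ∀ n y, (∑ i ∈ Finset.range n, (t i).indicator (fun _ => (1:ℝ)) y) =
          (⋃ i ∈ Finset.range n, t i).indicator (fun _ => (1:ℝ)) y := fun n y => by
        rw [Finset.indicator_biUnion]
        intro i _ j _ hij
        exact hd hij
      refine tendsto_integral_of_dominated_convergence (fun _ => 2) (fun n => ?_) (integrable_const _)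
        (fun n => Eventually.of_forall fun y => ?_) (Eventually.of_forall fun y => ?_)
      · exact ((measurable_const.indicator (MeasurableSet.iUnion htm')).sub
          (Finset.measurable_sum _ fun i _ => measurable_const.indicator (htm' i))).abs.aestronglyMeasurable
      · rw [hs, Real.norm_eq_abs, abs_abs]
        exact (abs_sub _ _).trans (by linarith [ind_abs_le (⋃ i, t i) y, ind_abs_le (⋃ i ∈ Finset.range n, t i) y])
      · by_cases hy : ∃ i, y ∈ t i
        · obtain ⟨i, hi⟩ := hy
          refine tendsto_const_nhds.congr' ?_
          filter_upwards [eventually_gt_atTop i] with n hn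
          rw [hs, Set.indicator_of_mem (Set.mem_iUnion.2 ⟨i, hi⟩), Set.indicator_of_mem]
          · simp
          · exact Set.mem_biUnion (by simpa using hn) hi
        · push Not at hy
          simp [hy]
    rw [integral_zero] at hlim
    obtain ⟨n, hn⟩ := (hlim.eventually (gt_mem_nhds hε)).exists
    exact ⟨_, Good.sum (Finset.range n) fun i _ => ht i, hn.le⟩

theorem good_structured (hS : MeasurePreserving S ν ν) (hT : MeasurePreserving T ν ν)
    (hcomm : ∀ y, S (T y) = T (S y)) (h0 : Measurable f0) (h1 : Measurable f1) (h2 : Measurable f2)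
    (b0 : ∀ y, |f0 y| ≤ 1) (b1 : ∀ y, |f1 y| ≤ 1) (b2 : ∀ y, |f2 y| ≤ 1)
    {w : Y → ℝ} (hw : Measurable[invSigma S ⊔ invSigma T] w) (hb : ∀ y, |w y| ≤ 1) :
    Good ν S T f0 f1 f2 w := by
  refine Good.of_L1 hS hT h0 h1 h2 b0 b1 b2 (hw.mono (sup_le_ambient S T) le_rfl) hb fun ε hε => ?_
  obtain ⟨n, hn⟩ := exists_nat_gt ε⁻¹
  have hn0 : (0:ℝ) < n := (inv_pos.2 hε).trans hn
  have hg : Good ν S T f0 f1 f2 (fun y => ∑ k ∈ Finset.Icc (-(n:ℤ)) n,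
      ((k:ℝ) / n) * ({y | ⌊(n:ℝ) * w y⌋ = k}.indicator (fun _ => 1) y)) := by
    refine Good.sum _ fun k _ => (good_set hS hT hcomm h0 h1 h2 b0 b1 b2 ?_).smul _
    have h3 : Measurable[invSigma S ⊔ invSigma T] fun y => ⌊(n:ℝ) * w y⌋ :=
      Int.measurable_floor.comp (hw.const_mul _)
    exact h3 (measurableSet_singleton k)
  have hgv : ∀ y, (∑ k ∈ Finset.Icc (-(n:ℤ)) n,
      ((k:ℝ) / n) * ({y | ⌊(n:ℝ) * w y⌋ = k}.indicator (fun _ => (1:ℝ)) y)) = ⌊(n:ℝ) * w y⌋ / n := by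
    intro y
    rw [Finset.sum_eq_single ⌊(n:ℝ) * w y⌋]
    · simp
    · intro k _ hk
      rw [Set.indicator_of_notMem, mul_zero]
      exact fun h => hk h.symm
    · intro h
      exfalso
      apply h
      have := abs_le.1 (hb y)
      rw [Finset.mem_Icc]
      constructor
      · rw [Int.le_floor]; push_cast; nlinarith
      · have : (⌊(n:ℝ) * w y⌋ : ℝ) ≤ n := (Int.floor_le _).trans (by nlinarith)
        exact_mod_cast this
  refine ⟨_, hg, ?_⟩
  have hbd : ∀ y, |w y - ∑ k ∈ Finset.Icc (-(n:ℤ)) n,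
      ((k:ℝ) / n) * ({y | ⌊(n:ℝ) * w y⌋ = k}.indicator (fun _ => (1:ℝ)) y)| ≤ ε := by
    intro y
    rw [hgv]
    have e1 := Int.floor_le ((n:ℝ) * w y)
    have e2 := Int.lt_floor_add_one ((n:ℝ) * w y)
    have e3 : w y - ⌊(n:ℝ) * w y⌋ / n = (n * w y - ⌊(n:ℝ) * w y⌋) / n := by field_simp
    have e4 : 1 < ε * n := by
      calc 1 = ε * ε⁻¹ := by field_simp
        _ < ε * n := by gcongr
    rw [e3, abs_of_nonneg (div_nonneg (by linarith) hn0.le), div_le_iff₀ hn0]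
    linarith
  calc _ ≤ ∫ y, ε ∂ν := integral_mono_of_nonneg (Eventually.of_forall fun y => abs_nonneg _)
        (integrable_const _) (Eventually.of_forall hbd)
    _ = ε := by simp

end structured2
open MeasureTheory Filter
set_option linter.unusedSectionVars false

section joining

variable {Y : Type*} [MeasurableSpace Y] {ν : Measure Y} [IsProbabilityMeasure ν]
  {S T : Y → Y} {ν2 : Measure (Y × Y)}

lemma isProb_joining (h : IsRelIndJoining ν S ν2) : IsProbabilityMeasure ν2 := by
  have h1 := h (fun _ => 1) (fun _ => 1) measurable_const measurable_const ⟨1, by simp⟩ ⟨1, by simp⟩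
  rw [condExp_const (invSigma_le S)] at h1
  simp only [mul_one, integral_const, smul_eq_mul, probReal_univ] at h1
  constructor
  rw [measureReal_def, ENNReal.toReal_eq_one_iff] at h1
  exact h1

lemma joining_rect (h : IsRelIndJoining ν S ν2) {A B : Set Y} (hA : MeasurableSet A) (hB : MeasurableSet B) :
    ν2.real (A ×ˢ B) = ∫ y, (ν[A.indicator fun _ => (1:ℝ) | invSigma S]) y *
      (ν[B.indicator fun _ => (1:ℝ) | invSigma S]) y ∂ν := by
  rw [← h _ _ (measurable_const.indicator hA) (measurable_const.indicator hB) ⟨1, ind_abs_le A⟩ ⟨1, ind_abs_le B⟩]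
  rw [← integral_indicator_one (hA.prod hB)]
  congr 1; ext p
  by_cases h1 : p.1 ∈ A <;> by_cases h2 : p.2 ∈ B <;> simp [Set.indicator, h1, h2]

lemma joining_snd (h : IsRelIndJoining ν S ν2) : MeasurePreserving Prod.snd ν2 ν := by
  have := isProb_joining h
  refine ⟨measurable_snd, ?_⟩
  ext A hA
  rw [Measure.map_apply measurable_snd hA, ← measureReal_eq_measureReal_iff]
  have h1 := joining_rect h MeasurableSet.univ hA
  rw [Set.univ_prod, Set.indicator_univ, condExp_const (invSigma_le S)] at h1
  simp only [one_mul] at h1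
  rw [h1, integral_condExp (invSigma_le S), ← integral_indicator_one hA]
  rfl

lemma joining_map (h : IsRelIndJoining ν S ν2) {a b : Y → Y} (ha : Measurable a) (hb : Measurable b)
    (hab : ∀ A B : Set Y, MeasurableSet A → MeasurableSet B → ν2.real ((a ⁻¹' A) ×ˢ (b ⁻¹' B)) = ν2.real (A ×ˢ B)) :
    MeasurePreserving (Prod.map a b) ν2 ν2 := by
  have := isProb_joining h
  refine ⟨ha.prodMap hb, ?_⟩
  have : IsFiniteMeasure (ν2.map (Prod.map a b)) := Measure.isFiniteMeasure_map _ _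
  refine Measure.ext_prod fun {A B} hA hB => ?_
  rw [Measure.map_apply (ha.prodMap hb) (hA.prod hB), ← measureReal_eq_measureReal_iff]
  exact hab A B hA hB

lemma condExp_comp_self (hS : MeasurePreserving S ν ν) {f : Y → ℝ} (hf : Measurable f)
    {C : ℝ} (hC : ∀ y, |f y| ≤ C) :
    ν[fun y => f (S y) | invSigma S] =ᵐ[ν] ν[f | invSigma S] := by
  filter_upwards [condExp_comp_commute hS hS (fun _ => rfl) hf hC] with y hy
  rw [hy]
  exact comp_eq_of_invSigma stronglyMeasurable_condExp.measurable y

lemma joining_id_S (h : IsRelIndJoining ν S ν2) (hS : MeasurePreserving S ν ν) :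
    MeasurePreserving (Prod.map id S) ν2 ν2 := by
  refine joining_map h measurable_id hS.measurable fun A B hA hB => ?_
  rw [joining_rect h hA hB, joining_rect h (measurable_id hA) (hS.measurable hB)]
  refine integral_congr_ae ?_
  filter_upwards [condExp_comp_self hS (measurable_const.indicator hB (f := fun _ => (1:ℝ))) (ind_abs_le B)] with y hy
  rw [← hy]
  rfl

lemma integral_comp_mp {Z W : Type*} [MeasurableSpace Z] [MeasurableSpace W] {ν : Measure Z} {η : Measure W}
    {π : Z → W} (hπ : MeasurePreserving π ν η) {g : W → ℝ}
    (hg : Measurable g) : ∫ y, g (π y) ∂ν = ∫ y, g y ∂η := by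
  conv_rhs => rw [← hπ.map_eq]
  rw [integral_map hπ.measurable.aemeasurable hg.aestronglyMeasurable]

lemma joining_T_T (h : IsRelIndJoining ν S ν2) (hS : MeasurePreserving S ν ν)
    (hT : MeasurePreserving T ν ν) (hcomm : ∀ y, S (T y) = T (S y)) :
    MeasurePreserving (Prod.map T T) ν2 ν2 := by
  refine joining_map h hT.measurable hT.measurable fun A B hA hB => ?_
  rw [joining_rect h hA hB, joining_rect h (hT.measurable hA) (hT.measurable hB)]
  have hm : ∀ f : Y → ℝ, Measurable (ν[f | invSigma S]) := fun f =>
    (stronglyMeasurable_condExp.measurable).mono (invSigma_le S) le_rfl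
  have e : ∫ y, (ν[A.indicator fun _ => (1:ℝ) | invSigma S]) y *
      (ν[B.indicator fun _ => (1:ℝ) | invSigma S]) y ∂ν = ∫ y, (ν[A.indicator fun _ => (1:ℝ) | invSigma S]) (T y) *
      (ν[B.indicator fun _ => (1:ℝ) | invSigma S]) (T y) ∂ν := by
    exact (integral_comp_mp hT ((hm _).mul (hm _))).symm
  rw [e]
  refine integral_congr_ae ?_
  filter_upwards [condExp_comp_commute hS hT hcomm (measurable_const.indicator hB (f := fun _ => (1:ℝ))) (ind_abs_le B),
    condExp_comp_commute hS hT hcomm (measurable_const.indicator hA (f := fun _ => (1:ℝ))) (ind_abs_le A)] with y hy hy'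
  rw [← hy, ← hy']
  rfl

theorem exists_joining [StandardBorelSpace Y] (ν : Measure Y) [IsProbabilityMeasure ν] (S : Y → Y) :
    ∃ ν2 : Measure (Y × Y), IsRelIndJoining ν S ν2 := by
  let κ : ProbabilityTheory.Kernel Y Y :=
    (ProbabilityTheory.condExpKernel ν (invSigma S)).comap id (measurable_id'' (invSigma_le S))
  have hκ : ProbabilityTheory.IsMarkovKernel κ := by infer_instance
  have hκe : ∀ {f : Y → ℝ}, Integrable f ν → ν[f | invSigma S] =ᵐ[ν] fun y => ∫ z, f z ∂(κ y) := fun hf =>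
    ProbabilityTheory.condExp_ae_eq_integral_condExpKernel (invSigma_le S) hf
  refine ⟨(ν.compProd (κ.prod κ)).map Prod.snd, ?_⟩
  rintro f0 f1 hf0 hf1 ⟨C0, hC0⟩ ⟨C1, hC1⟩
  have hm : Measurable fun p : Y × Y => f0 p.1 * f1 p.2 :=
    (hf0.comp measurable_fst).mul (hf1.comp measurable_snd)
  rw [integral_map measurable_snd.aemeasurable hm.aestronglyMeasurable, Measure.integral_compProd]
  · refine integral_congr_ae ?_
    filter_upwards [hκe (integrable_of_bdd hf0 hC0), hκe (integrable_of_bdd hf1 hC1)] with y h0 h1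
    rw [h0, h1, ProbabilityTheory.Kernel.prod_apply]
    exact integral_prod_mul f0 f1
  · refine integrable_of_bdd (hm.comp measurable_snd) (C := C0 * C1) fun y => ?_
    rw [abs_mul]
    exact mul_le_mul (hC0 _) (hC1 _) (abs_nonneg _) ((abs_nonneg _).trans (hC0 y.2.1))

lemma integral_avg {u : ℕ → Y → ℝ} (hu : ∀ i, Integrable (u i) ν) (N : ℕ) :
    ∫ y, avg N (fun i => u i y) ∂ν = avg N fun i => ∫ y, u i y ∂ν := by
  unfold avg
  rw [integral_const_mul, integral_finsetSum _ fun i _ => hu i]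

lemma joining_sq (h : IsRelIndJoining ν S ν2) (hT : Measurable T) {r : Y → ℝ} (hr : Measurable r)
    (hb : ∀ y, |r y| ≤ 1) (H : ℕ) :
    avg H (fun i => avg H fun j => ∫ y, ((ν[fun y => r (T^[i] y) * r (T^[j] y) | invSigma S]) y) ^ 2 ∂ν) =
    ∫ p, (avg H fun i => (fun z : Y × Y => r z.1 * r z.2) ((Prod.map T T)^[i] p)) ^ 2 ∂ν2 := by
  have := isProb_joining h
  have hri : ∀ i, Measurable fun y => r (T^[i] y) := fun i => hr.comp (hT.iterate i)
  have hrr : ∀ i, Measurable fun p : Y × Y => r (T^[i] p.1) * r (T^[i] p.2) := fun i =>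
    ((hri i).comp measurable_fst).mul ((hri i).comp measurable_snd)
  have hrb : ∀ i (p : Y × Y), |r (T^[i] p.1) * r (T^[i] p.2)| ≤ 1 := fun i p => abs_mul_le_one (hb _) (hb _)
  simp only [Prod.map_iterate, Prod.map_fst, Prod.map_snd, sq (avg _ _), avg_mul_avg]
  rw [integral_avg]
  · congr 1; ext i
    rw [integral_avg]
    · congr 1; ext j
      have h1 := h (fun y => r (T^[i] y) * r (T^[j] y)) (fun y => r (T^[i] y) * r (T^[j] y))
        ((hri i).mul (hri j)) ((hri i).mul (hri j)) ⟨1, fun y => abs_mul_le_one (hb _) (hb _)⟩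
        ⟨1, fun y => abs_mul_le_one (hb _) (hb _)⟩
      simp only [sq]
      rw [← h1]
      congr 1; ext p
      ring
    · exact fun j => integrable_of_bdd ((hrr i).mul (hrr j)) fun p => abs_mul_le_one (hrb i p) (hrb j p)
  · exact fun i => integrable_of_bdd (measurable_avg (fun j => (hrr i).mul (hrr j)) H)
      fun p => abs_avg_le_const zero_le_one fun j => abs_mul_le_one (hrb i p) (hrb j p)

end joining
open MeasureTheory Filter
set_option linter.unusedSectionVars false

section nullpart

variable {Y : Type*} [MeasurableSpace Y] {ν : Measure Y} [IsProbabilityMeasure ν]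
  {S T : Y → Y} {ν2 : Measure (Y × Y)} {f0 f1 f2 : Y → ℝ}

lemma tendsto_avg {ι : Type*} {l : Filter ι} {u : ι → ℕ → ℝ} {v : ℕ → ℝ} (h : ∀ i, Tendsto (fun n => u n i) l (nhds (v i)))
    (N : ℕ) : Tendsto (fun n => avg N (u n)) l (nhds (avg N v)) := by
  unfold avg
  exact (tendsto_finsetSum _ fun i _ => h i).const_mul _

lemma tendsto_const_div (c : ℝ) : Tendsto (fun n : ℕ => c / n) atTop (nhds 0) :=
  tendsto_const_div_atTop_nhds_zero_nat c

lemma avg_swap3 (H N : ℕ) (u : ℕ → ℕ → ℕ → ℝ) :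
    (avg H fun h => avg H fun h' => avg N fun i => u h h' i) =
      avg N fun i => avg H fun h => avg H fun h' => u h h' i := by
  rw [show (fun h => avg H fun h' => avg N fun i => u h h' i) = fun h => avg N fun i => avg H fun h' => u h h' i from
    funext fun h => avg_comm _ _ _, avg_comm]

lemma avg_swap4 (H N : ℕ) (u : ℕ → ℕ → ℕ → ℕ → ℝ) :
    (avg H fun h => avg H fun h' => avg N fun i => avg N fun m => u h h' i m) =
      avg N fun i => avg N fun m => avg H fun h => avg H fun h' => u h h' i m := by
  rw [avg_swap3 H N fun h h' i => avg N fun m => u h h' i m]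
  congr 1; ext i
  exact avg_swap3 H N fun h h' m => u h h' i m

theorem null_part (hS : MeasurePreserving S ν ν) (hT : MeasurePreserving T ν ν)
    (hcomm : ∀ y, S (T y) = T (S y)) (hj : IsRelIndJoining ν S ν2)
    (b0 : ∀ y, |f0 y| ≤ 1) (b1 : ∀ y, |f1 y| ≤ 1) (b2 : ∀ y, |f2 y| ≤ 1)
    {r : Y → ℝ} (hr : Measurable r) (hb : ∀ y, |r y| ≤ 1) {t : ℝ} (ht : 0 < t)
    (hσ : ∫ p, ((ν2[fun z => r z.1 * r z.2 | invSigma (Prod.map T T)]) p) ^ 2 ∂ν2 < t ^ 4) :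
    ∃ D : Y → ℝ, Measurable D ∧ Integrable D ν ∧ ∫ y, D y ∂ν ≤ 7 * t ∧
      ∀ᵐ y ∂ν, ∀ ε > 0, ∃ n, ∀ q ∈ idx n, |A4 S T f0 f1 f2 r q y| ≤ D y + ε := by
  have := isProb_joining hj
  have hTT := joining_T_T hj hS hT hcomm
  have hri : ∀ i, Measurable fun y => r (T^[i] y) := fun i => hr.comp (hT.measurable.iterate i)
  have hrij : ∀ i j, Measurable fun y => r (T^[i] y) * r (T^[j] y) := fun i j => (hri i).mul (hri j)
  have hrijb : ∀ i j y, |r (T^[i] y) * r (T^[j] y)| ≤ 1 := fun i j y => abs_mul_le_one (hb _) (hb _)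
  have hlim1 := mean_ergodic_sq hTT (f := fun z : Y × Y => r z.1 * r z.2)
    ((hr.comp measurable_fst).mul (hr.comp measurable_snd)) (C := 1) fun z => abs_mul_le_one (hb _) (hb _)
  obtain ⟨H, hH1, hH0⟩ := ((hlim1.eventually (gt_mem_nhds hσ)).and (eventually_gt_atTop 0)).exists
  rw [← joining_sq hj hT.measurable hr hb] at hH1
  have hlim2 : Tendsto (fun L => avg H fun i => avg H fun j => ∫ y, (avg L fun l =>
      (fun y => r (T^[i] y) * r (T^[j] y)) (S^[l] y)) ^ 2 ∂ν) atTop (nhds (avg H fun i => avg H fun j =>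
        ∫ y, ((ν[fun y => r (T^[i] y) * r (T^[j] y) | invSigma S]) y) ^ 2 ∂ν)) :=
    tendsto_avg (fun i => tendsto_avg (fun j => mean_ergodic_sq hS (hrij i j) (hrijb i j)) H) H
  obtain ⟨L, hL1, hL0⟩ := ((hlim2.eventually (gt_mem_nhds hH1)).and (eventually_gt_atTop 0)).exists
  set Ψ : ℕ → ℕ → Y → ℝ := fun i j y => (avg L fun l => (fun y => r (T^[i] y) * r (T^[j] y)) (S^[l] y)) ^ 2 with hΨ
  have hΨm : ∀ i j, Measurable (Ψ i j) := fun i j =>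
    (measurable_avg (fun l => (hrij i j).comp (hS.measurable.iterate l)) L).pow_const 2
  have hΨb : ∀ i j y, |Ψ i j y| ≤ 1 := fun i j y => by
    rw [hΨ]; simp only [abs_pow]
    exact pow_le_one₀ (abs_nonneg _) (abs_avg_le_const zero_le_one fun l => hrijb _ _ _)
  set Φ : Y → ℝ := fun y => avg H fun i => avg H fun j => Ψ i j y with hΦ
  have hΦm : Measurable Φ := measurable_avg (fun i => measurable_avg (fun j => hΨm i j) H) H
  have hΦb : ∀ y, |Φ y| ≤ 1 := fun y => abs_avg_le_const zero_le_one fun i =>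
    abs_avg_le_const zero_le_one fun j => hΨb _ _ _
  have hΦi : ∫ y, Φ y ∂ν < t ^ 4 := by
    rw [hΦ]
    rw [integral_avg]
    · refine lt_of_eq_of_lt ?_ hL1
      congr 1; ext i
      rw [integral_avg]
      exact fun j => integrable_of_bdd (hΨm i j) (hΨb i j)
    · exact fun i => integrable_of_bdd (measurable_avg (fun j => hΨm i j) H)
        fun y => abs_avg_le_const zero_le_one fun j => hΨb _ _ _
  obtain ⟨F, hFm, hFb, hFi, hFl⟩ := ergodic2 hS hT hΦm hΦb
  have hFint := integrable_of_bdd (ν := ν) hFm hFb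
  refine ⟨fun y => 3 * t + 4 * (t ^ 3)⁻¹ * F y, (hFm.const_mul _).const_add _,
    (integrable_const _).add (hFint.const_mul _), ?_, ?_⟩
  · rw [integral_add (integrable_const _) (hFint.const_mul _), integral_const_mul (4 * (t ^ 3)⁻¹), hFi]
    simp only [integral_const, probReal_univ, smul_eq_mul, one_mul]
    have : 4 * (t ^ 3)⁻¹ * ∫ y, Φ y ∂ν ≤ 4 * (t ^ 3)⁻¹ * t ^ 4 := by gcongr
    have e : 4 * (t ^ 3)⁻¹ * t ^ 4 = 4 * t := by field_simp
    linarith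
  · filter_upwards [hFl] with y hy ε hε
    have e1 := ((tendsto_const_div (2 * H)).eventually (gt_mem_nhds (show (0:ℝ) < ε / 3 by positivity)))
    have e2 := ((tendsto_const_div (2 * t⁻¹ * (2 * L))).eventually (gt_mem_nhds (show (0:ℝ) < ε / 3 by positivity)))
    have e3 : ∀ᶠ n in atTop, 4 * (t^3)⁻¹ * (avg2 S T Φ n y) < 4 * (t^3)⁻¹ * F y + ε / 3 :=
      (hy.const_mul _).eventually (gt_mem_nhds (by linarith))
    obtain ⟨n1, h1⟩ := eventually_atTop.1 e1
    obtain ⟨n2, h2⟩ := eventually_atTop.1 e2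
    obtain ⟨n3, h3⟩ := eventually_atTop.1 e3
    refine ⟨max (max n1 n2) n3, fun q hq => ?_⟩
    have g1 := h1 q.2.2 (((le_max_left _ _).trans (le_max_left _ _)).trans hq.2.1)
    have g2 := h2 q.2.1 (((le_max_right _ _).trans (le_max_left _ _)).trans hq.1)
    have g3 := h3 (2 * q.1) (by have := (le_max_right _ _).trans (idx_le hq); omega)
    have key := arr_null (u0 := fun i j => f0 (S^[i] (T^[j] y))) (u1 := fun i j => f1 (S^[i] (T^[j] y)))
      (u2 := fun i j => f2 (S^[i] (T^[j] y))) (u3 := fun i j => r (S^[i] (T^[j] y)))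
      (fun _ _ => b0 _) (fun _ _ => b1 _) (fun _ _ => b2 _) (fun _ _ => hb _) hq.2.2.1 hq.2.2.2 hH0 hL0 ht
    have e : (avg H fun h => avg H fun h' => avg (2 * q.1) fun i => avg (2 * q.1) fun m =>
        (avg L fun l => (fun i j => r (S^[i] (T^[j] y))) (i + l) (m + h) *
          (fun i j => r (S^[i] (T^[j] y))) (i + l) (m + h')) ^ 2) = avg2 S T Φ (2 * q.1) y := by
      unfold avg2
      rw [avg_swap4]
      congr 1; ext i; congr 1; ext m
      simp only [hΦ]
      congr 1; ext h; congr 1; ext h'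
      simp only [hΨ]
      congr 2; ext l
      have : ∀ h, S^[i + l] (T^[m + h] y) = T^[h] (S^[l] (S^[i] (T^[m] y))) := fun h => by
        rw [← Function.iterate_add_apply S, ← iter_comm hcomm, ← Function.iterate_add_apply T, add_comm i l, add_comm m h]
      rw [this, this]
    rw [e] at key
    refine key.trans ?_
    have e5 : 2 * t⁻¹ * (2 * L / q.2.1 + t ^ 2 + 2 * (t ^ 2)⁻¹ * avg2 S T Φ (2 * q.1) y) =
      2 * t⁻¹ * (2 * L) / q.2.1 + 2 * t + 4 * (t ^ 3)⁻¹ * avg2 S T Φ (2 * q.1) y := by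
      field_simp
      ring
    rw [e5]
    linarith

end nullpart
open MeasureTheory Filter
set_option linter.unusedSectionVars false

section energy
universe u

lemma measurable_snd_sup {Y : Type*} [MeasurableSpace Y] (S T : Y → Y) :
    Measurable[invSigma (Prod.map (id : Y → Y) S) ⊔ invSigma (Prod.map T T), invSigma S ⊔ invSigma T]
      (Prod.snd : Y × Y → Y) := by
  rw [measurable_iff_le_map]
  refine sup_le (fun A hA => ?_) (fun B hB => ?_)
  · refine le_sup_left (a := invSigma (Prod.map (id : Y → Y) S)) (b := invSigma (Prod.map T T)) _
      ⟨measurable_snd hA.1, ?_⟩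
    conv_rhs => rw [← hA.2]
    rfl
  · refine le_sup_right (a := invSigma (Prod.map (id : Y → Y) S)) (b := invSigma (Prod.map T T)) _
      ⟨measurable_snd hB.1, ?_⟩
    conv_rhs => rw [← hB.2]
    rfl

lemma measurable_fst_inv {Y : Type*} [MeasurableSpace Y] (S : Y → Y) {r : Y → ℝ} (hr : Measurable r) :
    Measurable[invSigma (Prod.map (id : Y → Y) S)] fun p : Y × Y => r p.1 :=
  fun _ hs => ⟨(hr.comp measurable_fst) hs, rfl⟩

lemma A4_snd {Y : Type*} [MeasurableSpace Y] (S T : Y → Y) (f0 f1 f2 f : Y → ℝ) (q : ℕ × ℕ × ℕ) (p : Y × Y) :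
    A4 (Prod.map id S) (Prod.map T T) (fun p => f0 p.2) (fun p => f1 p.2) (fun p => f2 p.2) (fun p => f p.2) q p =
      A4 S T f0 f1 f2 f q p.2 := by
  simp only [A4, Prod.map_iterate, Prod.map_snd]

lemma integral_mul_condExp_inv {Y : Type*} {m : MeasurableSpace Y} [mY : MeasurableSpace Y] {ν : Measure Y}
    [IsProbabilityMeasure ν] (hm : m ≤ mY) {f G : Y → ℝ} (hf : Measurable f) {C D : ℝ}
    (hC : ∀ y, |f y| ≤ C) (hG : Measurable[m] G) (hD : ∀ y, |G y| ≤ D) :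
    ∫ y, f y * G y ∂ν = ∫ y, (ν[f | m]) y * G y ∂ν := by
  have hGm : Measurable G := hG.mono hm le_rfl
  have hfG : Integrable (f * G) ν := integrable_of_bdd (C := C * D) (hf.mul hGm) fun y => by
    rw [Pi.mul_apply, abs_mul]
    exact mul_le_mul (hC y) (hD y) (abs_nonneg _) ((abs_nonneg _).trans (hC y))
  have h1 := condExp_mul_of_stronglyMeasurable_right (m := m) (μ := ν) hG.stronglyMeasurable hfG
    (integrable_of_bdd hf hC)
  calc ∫ y, f y * G y ∂ν = ∫ y, (f * G) y ∂ν := rfl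
    _ = ∫ y, (ν[f * G | m]) y ∂ν := (integral_condExp hm).symm
    _ = _ := integral_congr_ae h1

theorem energy_step {Y : Type u} [MeasurableSpace Y] [StandardBorelSpace Y] (ν : Measure Y) [IsProbabilityMeasure ν]
    {S T : Y → Y} (hS : MeasurePreserving S ν ν) (hT : MeasurePreserving T ν ν)
    (hcomm : ∀ y, S (T y) = T (S y)) {f w : Y → ℝ} (hf : Measurable f) (bf : ∀ y, |f y| ≤ 1)
    (hw : Measurable[invSigma S ⊔ invSigma T] w) (bw : ∀ y, |w y| ≤ 1)
    {ν2 : Measure (Y × Y)} (hj : IsRelIndJoining ν S ν2) {σ : ℝ}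
    (hσ : ∫ p, ((ν2[fun z => ((f z.1 - w z.1) / 2) * ((f z.2 - w z.2) / 2) | invSigma (Prod.map T T)]) p) ^ 2 ∂ν2 = σ) :
    ∃ w' : Y × Y → ℝ, Measurable[invSigma (Prod.map id S) ⊔ invSigma (Prod.map T T)] w' ∧
      (∀ p, |w' p| ≤ 1) ∧ ∫ p, (f p.2 - w' p) ^ 2 ∂ν2 ≤ ∫ y, (f y - w y) ^ 2 ∂ν - 3 * σ ^ 2 := by
  have hwm : Measurable w := hw.mono (sup_le_ambient S T) le_rfl
  have := isProb_joining hj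
  have hTT := joining_T_T hj hS hT hcomm
  set r : Y → ℝ := fun y => (f y - w y) / 2 with hr
  have hrm : Measurable r := (hf.sub hwm).div_const 2
  have hrb : ∀ y, |r y| ≤ 1 := fun y => by
    have h1 := abs_le.1 (bf y); have h2 := abs_le.1 (bw y)
    rw [hr, abs_le]; constructor <;> simp only <;> linarith
  have hrrm : Measurable fun z : Y × Y => r z.1 * r z.2 :=
    (hrm.comp measurable_fst).mul (hrm.comp measurable_snd)
  have hrrb : ∀ z : Y × Y, |r z.1 * r z.2| ≤ 1 := fun z => abs_mul_le_one (hrb _) (hrb _)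
  obtain ⟨G, hGi, hGm, hGb, hGe, -, -⟩ := birkhoff_bdd hTT hrrm hrrb
  have hG2 : ∫ p, G p ^ 2 ∂ν2 = σ := by
    rw [← hσ]
    refine integral_congr_ae ?_
    filter_upwards [hGe] with p hp
    rw [hp]
  have hcor : ∫ p, (r p.1 * r p.2) * G p ∂ν2 = σ := by
    rw [← hG2, integral_mul_condExp_inv (invSigma_le _) hrrm hrrb hGi hGb]
    refine integral_congr_ae ?_
    filter_upwards [hGe] with p hp
    rw [hp, sq]
  refine ⟨fun p => clip 1 (w p.2 + σ * (r p.1 * G p)), ?_, fun p => abs_clip_le zero_le_one _, ?_⟩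
  · refine (measurable_clip 1).comp (Measurable.add (hw.comp (measurable_snd_sup S T)) (Measurable.const_mul (Measurable.mul ?_ ?_) σ))
    · exact (measurable_fst_inv S hrm).mono le_sup_left le_rfl
    · exact hGi.mono le_sup_right le_rfl
  · have hW0m : Measurable fun p : Y × Y => r p.1 * G p := (hrm.comp measurable_fst).mul hGm
    have hW0b : ∀ p : Y × Y, |r p.1 * G p| ≤ 1 := fun p => abs_mul_le_one (hrb _) (hGb _)
    have i1 : Integrable (fun p : Y × Y => (f p.2 - w p.2) ^ 2) ν2 :=
      integrable_of_bdd (C := 4) (((hf.sub hwm).comp measurable_snd).pow_const 2) fun p => by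
        have h1 := abs_le.1 (bf p.2); have h2 := abs_le.1 (bw p.2)
        rw [abs_of_nonneg (sq_nonneg _)]; nlinarith
    have i2 : Integrable (fun p : Y × Y => (r p.1 * r p.2) * G p) ν2 :=
      integrable_of_bdd (C := 1) (hrrm.mul hGm) fun p => abs_mul_le_one (hrrb _) (hGb _)
    have hpt : ∀ p : Y × Y, (f p.2 - clip 1 (w p.2 + σ * (r p.1 * G p))) ^ 2 ≤
        (f p.2 - w p.2) ^ 2 - 4 * σ * ((r p.1 * r p.2) * G p) + σ ^ 2 := by
      intro p
      have h1 := abs_sub_clip_le (bf p.2) (w p.2 + σ * (r p.1 * G p))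
      have h2 := sq_le_sq.2 h1
      have h3 : (r p.1 * G p) ^ 2 ≤ 1 := by
        rw [← sq_abs]; exact pow_le_one₀ (abs_nonneg _) (hW0b p)
      have h4 : f p.2 - w p.2 = 2 * r p.2 := by simp only [hr]; ring
      have h5 : (f p.2 - (w p.2 + σ * (r p.1 * G p))) ^ 2 = (f p.2 - w p.2) ^ 2 - 4 * σ * ((r p.1 * r p.2) * G p)
          + σ ^ 2 * (r p.1 * G p) ^ 2 := by
        rw [← sub_sub, h4]; ring
      have h6 : σ ^ 2 * (r p.1 * G p) ^ 2 ≤ σ ^ 2 * 1 := by gcongr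
      linarith
    have hm : Measurable fun p : Y × Y => clip 1 (w p.2 + σ * (r p.1 * G p)) :=
      (measurable_clip 1).comp ((hwm.comp measurable_snd).add (hW0m.const_mul σ))
    calc ∫ p, (f p.2 - clip 1 (w p.2 + σ * (r p.1 * G p))) ^ 2 ∂ν2
        ≤ ∫ p, ((f p.2 - w p.2) ^ 2 - 4 * σ * ((r p.1 * r p.2) * G p) + σ ^ 2) ∂ν2 := by
          refine integral_mono_of_nonneg (Eventually.of_forall fun p => sq_nonneg _)
            ((i1.sub (i2.const_mul _)).add (integrable_const _)) (Eventually.of_forall hpt)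
      _ = ∫ p, (f p.2 - w p.2) ^ 2 ∂ν2 - 4 * σ * σ + σ ^ 2 := by
          have i3 : Integrable (fun p : Y × Y => (f p.2 - w p.2) ^ 2 - 4 * σ * ((r p.1 * r p.2) * G p)) ν2 :=
            i1.sub (i2.const_mul _)
          rw [integral_add i3 (integrable_const _), integral_sub i1 (i2.const_mul _),
            integral_const_mul (4 * σ), hcor]
          simp
      _ = ∫ y, (f y - w y) ^ 2 ∂ν - 3 * σ ^ 2 := by
          rw [integral_comp_mp (joining_snd hj) (g := fun y => (f y - w y) ^ 2) ((hf.sub hwm).pow_const 2)]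
          ring

theorem energy {t : ℝ} (ht : 0 < t) (m : ℕ) : ∀ (Y : Type u) [MeasurableSpace Y] [StandardBorelSpace Y]
    (ν : Measure Y) [IsProbabilityMeasure ν] (S T : Y → Y) (_ : MeasurePreserving S ν ν)
    (_ : MeasurePreserving T ν ν) (_ : ∀ y, S (T y) = T (S y)) (f0 f1 f2 f w : Y → ℝ)
    (_ : Measurable f0) (_ : Measurable f1) (_ : Measurable f2) (_ : Measurable f)
    (_ : ∀ y, |f0 y| ≤ 1) (_ : ∀ y, |f1 y| ≤ 1) (_ : ∀ y, |f2 y| ≤ 1) (_ : ∀ y, |f y| ≤ 1)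
    (_ : Measurable[invSigma S ⊔ invSigma T] w) (_ : ∀ y, |w y| ≤ 1)
    (_ : ∫ y, (f y - w y) ^ 2 ∂ν ≤ m * (3 * t ^ 8)),
    ∫⁻ y, osc (fun q => A4 S T f0 f1 f2 f q y) ∂ν ≤ ENNReal.ofReal (28 * t) := by
  induction m with
  | zero =>
    intro Y _ _ ν _ S T hS hT hcomm f0 f1 f2 f w h0 h1 h2 hf b0 b1 b2 bf hw bw he
    have hz : ∫ y, |f y - w y| ∂ν = 0 := by
      have hwm : Measurable w := hw.mono (sup_le_ambient S T) le_rfl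
      have hb : ∀ y, |(f y - w y) ^ 2| ≤ 4 := fun p => by
        have h1 := abs_le.1 (bf p); have h2 := abs_le.1 (bw p)
        rw [abs_of_nonneg (sq_nonneg _)]; nlinarith
      have h3 : ∫ y, (f y - w y) ^ 2 ∂ν = 0 := le_antisymm (by simpa using he) (integral_nonneg fun y => sq_nonneg _)
      have hi : Integrable (fun y => (f y - w y) ^ 2) ν := integrable_of_bdd ((hf.sub hwm).pow_const 2) hb
      rw [integral_eq_zero_iff_of_nonneg (fun y => sq_nonneg _) hi] at h3
      rw [← integral_zero Y ℝ (μ := ν)]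
      refine integral_congr_ae ?_
      filter_upwards [h3] with y hy
      simpa using hy
    have hg := good_structured (ν := ν) hS hT hcomm h0 h1 h2 b0 b1 b2 hw bw
    have hL := lintegral_osc_A4_L1 (ν := ν) hS hT b0 b1 b2 hf hg.1 (C := 2) fun y =>
      (abs_sub _ _).trans (by linarith [bf y, bw y])
    have h4 : ∫⁻ y, osc (fun q => A4 S T f0 f1 f2 w q y) ∂ν = 0 := by
      rw [← lintegral_zero (μ := ν)]
      refine lintegral_congr_ae ?_
      filter_upwards [hg.2.2] with y hy
      exact osc_eq_zero_iff.2 hy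
    rw [h4, hz] at hL
    refine hL.trans ?_
    simp
  | succ m ih =>
    intro Y _ _ ν _ S T hS hT hcomm f0 f1 f2 f w h0 h1 h2 hf b0 b1 b2 bf hw bw he
    have hwm : Measurable w := hw.mono (sup_le_ambient S T) le_rfl
    obtain ⟨ν2, hj⟩ := exists_joining ν S
    have := isProb_joining hj
    have hrb : ∀ y, |(f y - w y) / 2| ≤ 1 := fun y => by
      have h1 := abs_le.1 (bf y); have h2 := abs_le.1 (bw y)
      rw [abs_le]; constructor <;> linarith
    rcases lt_or_ge (∫ p, ((ν2[fun z => ((f z.1 - w z.1) / 2) * ((f z.2 - w z.2) / 2) |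
      invSigma (Prod.map T T)]) p) ^ 2 ∂ν2) (t ^ 4) with hlt | hge
    · obtain ⟨D, hDm, hDi, hDt, hD⟩ := null_part (f0 := f0) (f1 := f1) (f2 := f2) hS hT hcomm hj b0 b1 b2
        (r := fun y => (f y - w y) / 2) ((hf.sub hwm).div_const 2) hrb ht hlt
      have hg := good_structured (ν := ν) hS hT hcomm h0 h1 h2 b0 b1 b2 hw bw
      have h4 : ∫⁻ y, osc (fun q => A4 S T f0 f1 f2 w q y) ∂ν = 0 := by
        rw [← lintegral_zero (μ := ν)]
        refine lintegral_congr_ae ?_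
        filter_upwards [hg.2.2] with y hy
        exact osc_eq_zero_iff.2 hy
      have key := lintegral_osc_le (ν := ν) (A := A4 S T f0 f1 f2 f) (B := A4 S T f0 f1 f2 w)
        (D := fun y => 2 * D y) (hDm.const_mul 2) (hDi.const_mul 2) ?_
      · rw [h4, zero_add, integral_const_mul] at key
        exact key.trans (ENNReal.ofReal_le_ofReal (by linarith))
      · filter_upwards [hD] with y hy ε hε
        obtain ⟨n, hn⟩ := hy (ε / 2) (by positivity)
        refine ⟨n, fun q hq => ?_⟩
        have e : A4 S T f0 f1 f2 f q y - A4 S T f0 f1 f2 w q y = 2 * A4 S T f0 f1 f2 (fun y => (f y - w y) / 2) q y := by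
          rw [← A4_smul]
          simp only [A4, arr, ← avg_sub, ← mul_sub]
          congr 1; ext i; congr 1; ext j; congr 1; ext k; congr 1; ext p
          ring
        rw [e, abs_mul, abs_two]
        linarith [hn q hq]
    · obtain ⟨w', hw', bw', he'⟩ := energy_step ν hS hT hcomm hf bf hw bw hj rfl
      have hS' := joining_id_S hj hS
      have hT' := joining_T_T hj hS hT hcomm
      have h3 := ih (Y × Y) ν2 (Prod.map id S) (Prod.map T T) hS' hT'
        (fun p => by simp [Prod.map, hcomm]) (fun p => f0 p.2) (fun p => f1 p.2) (fun p => f2 p.2) (fun p => f p.2) w'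
        (h0.comp measurable_snd) (h1.comp measurable_snd) (h2.comp measurable_snd) (hf.comp measurable_snd)
        (fun _ => b0 _) (fun _ => b1 _) (fun _ => b2 _) (fun _ => bf _) hw' bw' ?_
      · simp only [A4_snd] at h3
        rwa [(joining_snd hj).lintegral_comp (f := fun y => osc fun q => A4 S T f0 f1 f2 f q y)
          (measurable_osc fun q => measurable_A4 hS.measurable hT.measurable h0 h1 h2 hf q)] at h3
      · refine he'.trans ?_
        have : (t ^ 4) ^ 2 ≤ (∫ p, ((ν2[fun z => ((f z.1 - w z.1) / 2) * ((f z.2 - w z.2) / 2) |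
          invSigma (Prod.map T T)]) p) ^ 2 ∂ν2) ^ 2 := by gcongr
        push_cast at he
        nlinarith

theorem cauchy_standard {Y : Type u} [MeasurableSpace Y] [StandardBorelSpace Y]
    (ν : Measure Y) [IsProbabilityMeasure ν] {S T : Y → Y} (hS : MeasurePreserving S ν ν)
    (hT : MeasurePreserving T ν ν) (hcomm : ∀ y, S (T y) = T (S y)) {f0 f1 f2 f : Y → ℝ}
    (h0 : Measurable f0) (h1 : Measurable f1) (h2 : Measurable f2) (hf : Measurable f)
    (b0 : ∀ y, |f0 y| ≤ 1) (b1 : ∀ y, |f1 y| ≤ 1) (b2 : ∀ y, |f2 y| ≤ 1) (bf : ∀ y, |f y| ≤ 1) :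
    ∀ᵐ y ∂ν, osc (fun q => A4 S T f0 f1 f2 f q y) = 0 := by
  have key : ∫⁻ y, osc (fun q => A4 S T f0 f1 f2 f q y) ∂ν = 0 := by
    refine le_antisymm (ENNReal.le_of_forall_pos_le_add fun ε hε _ => ?_) bot_le
    have hε' : (0:ℝ) < ε := hε
    set t : ℝ := ε / 28
    have ht : 0 < t := by positivity
    obtain ⟨m, hm⟩ := exists_nat_gt ((∫ y, (f y - (fun _ => (0:ℝ)) y) ^ 2 ∂ν) / (3 * t ^ 8))
    rw [div_lt_iff₀ (by positivity)] at hm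
    refine (energy ht m Y ν S T hS hT hcomm f0 f1 f2 f (fun _ => 0) h0 h1 h2 hf b0 b1 b2 bf
      measurable_const (by simp) hm.le).trans ?_
    rw [zero_add, ← ENNReal.ofReal_coe_nnreal]
    exact ENNReal.ofReal_le_ofReal (by simp only [t]; linarith)
  rwa [lintegral_eq_zero_iff (measurable_osc fun q =>
    measurable_A4 hS.measurable hT.measurable h0 h1 h2 hf q)] at key

end energy
open MeasureTheory Filter
set_option linter.unusedSectionVars false

section final

variable {X : Type*} [MeasurableSpace X] {μ : Measure X} [IsProbabilityMeasure μ]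
  {S T : X → X} {f0 f1 f2 f3 : X → ℝ}

theorem cauchy_general (hS : MeasurePreserving S μ μ)
    (hT : MeasurePreserving T μ μ) (hcomm : ∀ y, S (T y) = T (S y))
    (h0 : Measurable f0) (h1 : Measurable f1) (h2 : Measurable f2) (h3 : Measurable f3)
    (b0 : ∀ y, |f0 y| ≤ 1) (b1 : ∀ y, |f1 y| ≤ 1) (b2 : ∀ y, |f2 y| ≤ 1) (b3 : ∀ y, |f3 y| ≤ 1) :
    ∀ᵐ x ∂μ, Cau (fun q => A4 S T f0 f1 f2 f3 q x) := by
  let f : Fin 4 → X → ℝ := ![f0, f1, f2, f3]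
  have hfm : ∀ m, Measurable (f m) := by intro m; fin_cases m <;> assumption
  have hfb : ∀ m y, |f m y| ≤ 1 := by intro m; fin_cases m <;> assumption
  let Φ : X → (ℕ → ℕ → Fin 4 → ℝ) := fun x i j m => f m (S^[i] (T^[j] x))
  have hΦ : Measurable Φ := by
    refine measurable_pi_lambda _ fun i => measurable_pi_lambda _ fun j => measurable_pi_lambda _ fun m => ?_
    exact (hfm m).comp ((hS.measurable.iterate i).comp (hT.measurable.iterate j))
  let S' : (ℕ → ℕ → Fin 4 → ℝ) → (ℕ → ℕ → Fin 4 → ℝ) := fun ω i j => ω (i + 1) j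
  let T' : (ℕ → ℕ → Fin 4 → ℝ) → (ℕ → ℕ → Fin 4 → ℝ) := fun ω i j => ω i (j + 1)
  have hS'm : Measurable S' := by fun_prop
  have hT'm : Measurable T' := by fun_prop
  have hSc : Function.Semiconj Φ S S' := by
    intro x
    ext i j m
    simp only [Φ, S']
    have h1 := iter_comm (S := S) (T := T) hcomm 1 j x
    simp only [Function.iterate_one] at h1
    rw [Function.iterate_succ_apply, h1]
  have hTc : Function.Semiconj Φ T T' := by
    intro x
    ext i j m
    simp only [Φ, T']
    rw [Function.iterate_succ_apply]
  have hmp : ∀ {R : X → X} {R' : (ℕ → ℕ → Fin 4 → ℝ) → (ℕ → ℕ → Fin 4 → ℝ)}, MeasurePreserving R μ μ →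
      Measurable R' → Function.Semiconj Φ R R' → MeasurePreserving R' (μ.map Φ) (μ.map Φ) := by
    intro R R' hR hR' hc
    refine ⟨hR', ?_⟩
    rw [Measure.map_map hR' hΦ, ← hc.comp_eq, ← Measure.map_map hΦ hR.measurable, hR.map_eq]
  have : IsProbabilityMeasure (μ.map Φ) := Measure.isProbabilityMeasure_map hΦ.aemeasurable
  let g : Fin 4 → (ℕ → ℕ → Fin 4 → ℝ) → ℝ := fun m ω => clip 1 (ω 0 0 m)
  have hg : ∀ m, Measurable (g m) := fun m => (measurable_clip 1).comp (by fun_prop)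
  have i1 : StandardBorelSpace (Fin 4 → ℝ) := standardBorel_of_polish
  have i2 : StandardBorelSpace (ℕ → Fin 4 → ℝ) := standardBorel_of_polish
  have i3 : StandardBorelSpace (ℕ → ℕ → Fin 4 → ℝ) := standardBorel_of_polish
  have key := cauchy_standard (μ.map Φ) (hmp hS hS'm hSc) (hmp hT hT'm hTc) (fun ω => rfl)
    (hg 0) (hg 1) (hg 2) (hg 3) (fun _ => abs_clip_le zero_le_one _) (fun _ => abs_clip_le zero_le_one _)
    (fun _ => abs_clip_le zero_le_one _) (fun _ => abs_clip_le zero_le_one _)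
  filter_upwards [ae_of_ae_map hΦ.aemeasurable key] with x hx
  have hx' := osc_eq_zero_iff.1 hx
  have e : ∀ m i j, g m (S'^[i] (T'^[j] (Φ x))) = f m (S^[i] (T^[j] x)) := by
    intro m i j
    rw [← (hTc.iterate_right j).eq, ← (hSc.iterate_right i).eq]
    exact clip_eq (hfb m _)
  simp only [A4, e] at hx'
  exact hx'

lemma integral_mul_condExp_sym {Y : Type*} [MeasurableSpace Y] {ν : Measure Y} [IsProbabilityMeasure ν]
    {R : Y → Y} (hR : MeasurePreserving R ν ν) {f g : Y → ℝ} (hf : Measurable f) (hg : Measurable g)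
    (bf : ∀ y, |f y| ≤ 1) (bg : ∀ y, |g y| ≤ 1) :
    ∫ y, g y * (ν[f | invSigma R]) y ∂ν = ∫ y, (ν[g | invSigma R]) y * (ν[f | invSigma R]) y ∂ν := by
  obtain ⟨F, hFi, hFm, hFb, hFe, -, -⟩ := birkhoff_bdd hR hf bf
  have h1 := integral_mul_condExp_inv (ν := ν) (invSigma_le R) hg bg hFi hFb
  rw [integral_congr_ae (g := fun y => g y * F y), h1]
  · refine integral_congr_ae ?_
    filter_upwards [hFe] with y hy
    rw [hy]
  · filter_upwards [hFe] with y hy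
    rw [hy]

/-- the product along a parallelogram -/
def par (S T : X → X) (f0 f1 f2 f3 : X → ℝ) (k p : ℕ) (z : X) : ℝ :=
  f0 z * f1 (S^[k] z) * f2 (T^[p] z) * f3 (S^[k] (T^[p] z))

lemma A4_eq_par (hcomm : ∀ y, S (T y) = T (S y)) (q : ℕ × ℕ × ℕ) (x : X) :
    A4 S T f0 f1 f2 f3 q x = avg q.2.1 fun k => avg q.2.2 fun p => avg2 S T (par S T f0 f1 f2 f3 k p) q.1 x := by
  unfold A4 arr avg2
  have e : ∀ i j k p, f0 (S^[i] (T^[j] x)) * f1 (S^[i + k] (T^[j] x)) * f2 (S^[i] (T^[j + p] x)) *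
      f3 (S^[i + k] (T^[j + p] x)) = par S T f0 f1 f2 f3 k p (S^[i] (T^[j] x)) := by
    intro i j k p
    unfold par
    have e1 : S^[i + k] (T^[j] x) = S^[k] (S^[i] (T^[j] x)) := by
      rw [← Function.iterate_add_apply, add_comm]
    have e2 : S^[i] (T^[j + p] x) = T^[p] (S^[i] (T^[j] x)) := by
      rw [← iter_comm hcomm, ← Function.iterate_add_apply, add_comm]
    have e3 : S^[i + k] (T^[j + p] x) = S^[k] (T^[p] (S^[i] (T^[j] x))) := by
      rw [← e2, ← Function.iterate_add_apply, add_comm k i]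
    rw [e1, e2, e3]
  simp only [e]
  generalize par S T f0 f1 f2 f3 = u
  rw [show (fun i => avg q.1 fun j => avg q.2.1 fun k => avg q.2.2 fun p => u k p (S^[i] (T^[j] x))) =
    fun i => avg q.2.1 fun k => avg q.2.2 fun p => avg q.1 fun j => u k p (S^[i] (T^[j] x)) from ?_]
  · rw [avg_comm]
    congr 1; ext k
    rw [avg_comm]
  · ext i
    rw [avg_comm]
    congr 1; ext k
    rw [avg_comm]

theorem main_unit (hS : MeasurePreserving S μ μ)
    (hT : MeasurePreserving T μ μ) (hcomm : ∀ y, S (T y) = T (S y))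
    (herg : ∀ s : Set X, MeasurableSet s → S ⁻¹' s = s → T ⁻¹' s = s → μ s = 0 ∨ μ s = 1)
    {μS : Measure (X × X)} (hμS : IsRelIndJoining μ S μS)
    {μST : Measure (X × X × X × X)} (hμST : IsHostJoining μS T μST)
    (h0 : Measurable f0) (h1 : Measurable f1) (h2 : Measurable f2) (h3 : Measurable f3)
    (b0 : ∀ y, |f0 y| ≤ 1) (b1 : ∀ y, |f1 y| ≤ 1) (b2 : ∀ y, |f2 y| ≤ 1) (b3 : ∀ y, |f3 y| ≤ 1) :
    ∀ᵐ x ∂μ, Tendsto (fun N : ℕ => A4 S T f0 f1 f2 f3 (N, N, N) x) atTop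
      (nhds (∫ q, f0 q.1 * f1 q.2.1 * f2 q.2.2.1 * f3 q.2.2.2 ∂μST)) := by
  have := isProb_joining hμS
  have hTT := joining_T_T hμS hS hT hcomm
  set L := ∫ q, f0 q.1 * f1 q.2.1 * f2 q.2.2.1 * f3 q.2.2.2 ∂μST with hL
  have hparm : ∀ k p, Measurable (par S T f0 f1 f2 f3 k p) := fun k p =>
    ((h0.mul (h1.comp (hS.measurable.iterate k))).mul (h2.comp (hT.measurable.iterate p))).mul
      (h3.comp ((hS.measurable.iterate k).comp (hT.measurable.iterate p)))
  have hparb : ∀ k p z, |par S T f0 f1 f2 f3 k p z| ≤ 1 := fun k p z =>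
    abs_mul_le_one (abs_mul_le_one (abs_mul_le_one (b0 _) (b1 _)) (b2 _)) (b3 _)
  set c : ℕ → ℕ → ℝ := fun k p => ∫ z, par S T f0 f1 f2 f3 k p z ∂μ with hc
  have hlim1 : ∀ᵐ x ∂μ, ∀ k p, Tendsto (fun N => avg2 S T (par S T f0 f1 f2 f3 k p) N x) atTop (nhds (c k p)) := by
    rw [ae_all_iff]; intro k
    rw [ae_all_iff]; intro p
    exact ergodic2_const hS hT hcomm herg (hparm k p) (hparb k p)
  set d : ℕ → ℝ := fun p => ∫ z, (f0 z.1 * f1 z.2) * (f2 (T^[p] z.1) * f3 (T^[p] z.2)) ∂μS with hd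
  have hf2 : ∀ p, Measurable fun z => f2 (T^[p] z) := fun p => h2.comp (hT.measurable.iterate p)
  have hf3 : ∀ p, Measurable fun z => f3 (T^[p] z) := fun p => h3.comp (hT.measurable.iterate p)
  have hlim2 : ∀ p, Tendsto (fun K => avg K fun k => c k p) atTop (nhds (d p)) := by
    intro p
    have hg : Measurable fun z => f0 z * f2 (T^[p] z) := h0.mul (hf2 p)
    have hf : Measurable fun z => f1 z * f3 (T^[p] z) := h1.mul (hf3 p)
    have bg : ∀ z, |f0 z * f2 (T^[p] z)| ≤ 1 := fun z => abs_mul_le_one (b0 _) (b2 _)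
    have bf : ∀ z, |f1 z * f3 (T^[p] z)| ≤ 1 := fun z => abs_mul_le_one (b1 _) (b3 _)
    have hm := mean_ergodic_mul hS hf hg bf bg
    rw [integral_mul_condExp_sym hS hf hg bf bg, ← hμS _ _ hg hf ⟨1, bg⟩ ⟨1, bf⟩] at hm
    convert hm using 2
    · rename_i K
      rw [← integral_avg fun k => integrable_of_bdd (hparm k p) (hparb k p)]
      congr 1; ext z
      rw [← avg_mul_left]
      congr 1; ext k
      unfold par
      rw [iter_comm hcomm]
      ring
    · simp only [hd]
      congr 1; ext z
      ring
  have hlim3 : Tendsto (fun P => avg P d) atTop (nhds L) := by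
    have hg : Measurable fun z : X × X => f0 z.1 * f1 z.2 := (h0.comp measurable_fst).mul (h1.comp measurable_snd)
    have hf : Measurable fun z : X × X => f2 z.1 * f3 z.2 := (h2.comp measurable_fst).mul (h3.comp measurable_snd)
    have bg : ∀ z : X × X, |f0 z.1 * f1 z.2| ≤ 1 := fun z => abs_mul_le_one (b0 _) (b1 _)
    have bf : ∀ z : X × X, |f2 z.1 * f3 z.2| ≤ 1 := fun z => abs_mul_le_one (b2 _) (b3 _)
    have hm := mean_ergodic_mul hTT hf hg bf bg
    rw [integral_mul_condExp_sym hTT hf hg bf bg,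
      ← hμST f0 f1 f2 f3 h0 h1 h2 h3 ⟨1, b0⟩ ⟨1, b1⟩ ⟨1, b2⟩ ⟨1, b3⟩] at hm
    convert hm using 2
    rename_i P
    have hu : ∀ p, Integrable (fun z : X × X => (f0 z.1 * f1 z.2) * (f2 (T^[p] z.1) * f3 (T^[p] z.2))) μS := fun p =>
      integrable_of_bdd (C := 1) (hg.mul (((hf2 p).comp measurable_fst).mul ((hf3 p).comp measurable_snd)))
        fun z => abs_mul_le_one (bg z) (abs_mul_le_one (b2 _) (b3 _))
    rw [hd, ← integral_avg hu]
    congr 1; ext z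
    rw [← avg_mul_left]
    simp only [Prod.map_iterate, Prod.map_fst, Prod.map_snd]
  filter_upwards [hlim1, cauchy_general hS hT hcomm h0 h1 h2 h3 b0 b1 b2 b3] with x hx hcau
  refine tendsto_of_approx fun ε hε => ?_
  obtain ⟨n, hn⟩ := hcau ε hε
  filter_upwards [eventually_ge_atTop n] with M hM
  set a := A4 S T f0 f1 f2 f3 (M, M, M) x with ha
  have s1 : ∀ K ≥ n, ∀ P ≥ n, |a - avg P fun p => avg K fun k => c k p| ≤ ε := by
    intro K hK P hP
    have hl : Tendsto (fun N => A4 S T f0 f1 f2 f3 (N, K, P) x) atTop (nhds (avg P fun p => avg K fun k => c k p)) := by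
      rw [avg_comm]
      simp only [A4_eq_par hcomm]
      exact tendsto_avg (fun k => tendsto_avg (fun p => hx k p) P) K
    refine le_of_tendsto (hl.const_sub a).abs ?_
    filter_upwards [eventually_ge_atTop (max K P)] with N hN
    exact hn _ (idx_anti hM (idx_diag M)) _ ⟨hK, hP, (le_max_left _ _).trans hN, (le_max_right _ _).trans hN⟩
  have s2 : ∀ P ≥ n, |a - avg P d| ≤ ε := by
    intro P hP
    refine le_of_tendsto ((tendsto_avg (u := fun K p => avg K fun k => c k p) hlim2 P).const_sub a).abs ?_
    filter_upwards [eventually_ge_atTop n] with K hK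
    exact s1 K hK P hP
  refine le_of_tendsto (hlim3.const_sub a).abs ?_
  filter_upwards [eventually_ge_atTop n] with P hP
  exact s2 P hP

lemma A4_sum (N : ℕ) (x : X) :
    ((N : ℝ) ^ 4)⁻¹ * ∑ i ∈ Finset.range N, ∑ j ∈ Finset.range N,
        ∑ k ∈ Finset.range N, ∑ p ∈ Finset.range N,
          f0 (S^[i] (T^[j] x)) * f1 (S^[i + k] (T^[j] x)) *
          f2 (S^[i] (T^[j + p] x)) * f3 (S^[i + k] (T^[j + p] x)) = A4 S T f0 f1 f2 f3 (N, N, N) x := by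
  simp only [A4, arr, avg, ← Finset.mul_sum, ← mul_assoc]
  congr 1
  ring

end final

/-- a.e. convergence of the four-fold cubic average to
`∫ f0 ⊗ f1 ⊗ f2 ⊗ f3 dμ_{S,T}`. -/
theorem pointwise_fourfold_average {X : Type*} [MeasurableSpace X]
    (μ : Measure X) [IsProbabilityMeasure μ]
    (S T : X ≃ᵐ X) (hS : MeasurePreserving S μ μ) (hT : MeasurePreserving T μ μ)
    (hcomm : ∀ x, S (T x) = T (S x))
    (herg : ∀ s : Set X, MeasurableSet s → ⇑S ⁻¹' s = s → ⇑T ⁻¹' s = s → μ s = 0 ∨ μ s = 1)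
    (μS : Measure (X × X)) (hμS : IsRelIndJoining μ ⇑S μS)
    (μST : Measure (X × X × X × X)) (hμST : IsHostJoining μS ⇑T μST)
    (f0 f1 f2 f3 : X → ℝ)
    (hf0 : Measurable f0) (hf1 : Measurable f1) (hf2 : Measurable f2) (hf3 : Measurable f3)
    (hb0 : ∃ C, ∀ x, |f0 x| ≤ C) (hb1 : ∃ C, ∀ x, |f1 x| ≤ C)
    (hb2 : ∃ C, ∀ x, |f2 x| ≤ C) (hb3 : ∃ C, ∀ x, |f3 x| ≤ C) :
    ∀ᵐ x ∂μ, Tendsto (fun N : ℕ =>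
      ((N : ℝ) ^ 4)⁻¹ * ∑ i ∈ Finset.range N, ∑ j ∈ Finset.range N,
        ∑ k ∈ Finset.range N, ∑ p ∈ Finset.range N,
          f0 ((⇑S)^[i] ((⇑T)^[j] x)) * f1 ((⇑S)^[i + k] ((⇑T)^[j] x)) *
          f2 ((⇑S)^[i] ((⇑T)^[j + p] x)) * f3 ((⇑S)^[i + k] ((⇑T)^[j + p] x)))
      atTop (nhds (∫ q, f0 q.1 * f1 q.2.1 * f2 q.2.2.1 * f3 q.2.2.2 ∂μST)) := by
  obtain ⟨C0, hC0⟩ := hb0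
  obtain ⟨C1, hC1⟩ := hb1
  obtain ⟨C2, hC2⟩ := hb2
  obtain ⟨C3, hC3⟩ := hb3
  have : Nonempty X := μ.nonempty_of_neZero
  have z0 := (abs_nonneg _).trans (hC0 (Classical.arbitrary X))
  have z1 := (abs_nonneg _).trans (hC1 (Classical.arbitrary X))
  have z2 := (abs_nonneg _).trans (hC2 (Classical.arbitrary X))
  have z3 := (abs_nonneg _).trans (hC3 (Classical.arbitrary X))
  set C : ℝ := C0 + C1 + C2 + C3 + 1 with hC
  have hCp : 0 < C := by positivity
  have hbd : ∀ {f : X → ℝ} {D : ℝ}, (∀ x, |f x| ≤ D) → D ≤ C → ∀ x, |C⁻¹ * f x| ≤ 1 := by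
    intro f D hD hDC x
    rw [abs_mul, abs_of_pos (inv_pos.2 hCp), inv_mul_le_iff₀ hCp, mul_one]
    exact (hD x).trans hDC
  have key := main_unit hS hT hcomm herg hμS hμST (hf0.const_mul C⁻¹) (hf1.const_mul C⁻¹) (hf2.const_mul C⁻¹)
    (hf3.const_mul C⁻¹) (hbd hC0 (by linarith)) (hbd hC1 (by linarith)) (hbd hC2 (by linarith)) (hbd hC3 (by linarith))
  filter_upwards [key] with x hx
  have hx' := hx.const_mul (C ^ 4)
  rw [← integral_const_mul] at hx'
  simp only [← A4_sum, Finset.mul_sum] at hx'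
  simp only [Finset.mul_sum]
  convert hx' using 2
  · refine Finset.sum_congr rfl fun i _ => Finset.sum_congr rfl fun j _ => Finset.sum_congr rfl fun k _ =>
      Finset.sum_congr rfl fun p _ => ?_
    field_simp
  · congr 1; ext q
    field_simp
end

section
/- Let (X,S,T) be a strictly ergodic topological dynamical system with commuting homeomorphisms and unique invariant measure μ, such that (Q_{S,T}(X), G_{S,T}) is uniquely ergodic with unique invariant measure μ_{S,T}. Then for any continuous functions f0, f1, f2, f3 on X and every x ∈ X, (1/N⁴) Σ_{i=0}^{N-1} Σ_{j=0}^{N-1} Σ_{k=-i}^{N-1-i} Σ_{p=-j}^{N-1-j} f0(S^i T^j x) · f1(S^{i+k} T^j x) · f2(S^i T^{j+p} x) · f3(S^{i+k} T^{j+p} x) converges, as N → ∞, to ∫ f0(x0) f1(x1) f2(x2) f3(x3) dμ_{S,T}(x0,x1,x2,x3). -/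
open MeasureTheory Topology Filter

/-- The dynamical cube `Q_{S,T}(X)`. -/
def cubeQ {X : Type*} [TopologicalSpace X] (S T : X ≃ₜ X) : Set (X × X × X × X) :=
  closure {p | ∃ (x : X) (i j : ℤ),
    p = (x, (S.toEquiv ^ i) x, (T.toEquiv ^ j) x, (S.toEquiv ^ i) ((T.toEquiv ^ j) x))}

/-- The permutation `id × S × id × S` of `X⁴`. -/
def sideS {X : Type*} (S : X ≃ X) : Equiv.Perm (X × X × X × X) :=
  (Equiv.refl X).prodCongr (S.prodCongr ((Equiv.refl X).prodCongr S))

/-- The permutation `id × id × T × T` of `X⁴`. -/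
def sideT {X : Type*} (T : X ≃ X) : Equiv.Perm (X × X × X × X) :=
  (Equiv.refl X).prodCongr ((Equiv.refl X).prodCongr (T.prodCongr T))

/-- The diagonal permutation `g × g × g × g` of `X⁴`. -/
def diag4 {X : Type*} (g : X ≃ X) : Equiv.Perm (X × X × X × X) :=
  g.prodCongr (g.prodCongr (g.prodCongr g))

/-- The group `G_{S,T}` generated by `id×S×id×S`, `id×id×T×T` and `g×g×g×g` for `g` in the
group generated by `S` and `T`. -/
def GST {X : Type*} (S T : X ≃ X) : Subgroup (Equiv.Perm (X × X × X × X)) :=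
  Subgroup.closure ({sideS S, sideT T} ∪
    {d | ∃ g ∈ Subgroup.closure {S, T}, d = diag4 g})

section SkewHelpers

/-- Four-fold average over the box `[0,M)^4`. -/
noncomputable def skAvg (H : ℕ → ℕ → ℕ → ℕ → ℝ) (M : ℕ) : ℝ :=
  ((M : ℝ) ^ 4)⁻¹ * ∑ i ∈ Finset.range M, ∑ j ∈ Finset.range M,
    ∑ a ∈ Finset.range M, ∑ b ∈ Finset.range M, H i j a b

lemma sk_reindex (N i : ℕ) (g : ℤ → ℝ) :
    ∑ k ∈ Finset.Icc (-(i : ℤ)) ((N : ℤ) - 1 - i), g ((i : ℤ) + k)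
      = ∑ a ∈ Finset.range N, g (a : ℤ) := by
  symm
  refine Finset.sum_nbij' (fun a : ℕ => (a : ℤ) - i) (fun k : ℤ => (i + k).toNat) ?_ ?_ ?_ ?_ ?_
  · intro a ha
    simp only [Finset.mem_range, Finset.mem_Icc] at *
    omega
  · intro a ha
    simp only [Finset.mem_range, Finset.mem_Icc] at *
    omega
  · intro a ha
    simp
  · intro a ha
    simp only [Finset.mem_range, Finset.mem_Icc] at *
    omega
  · intro a ha
    simp

lemma sk_sum_shift (h : ℕ → ℝ) (M : ℕ) (K : ℝ) (hK : ∀ n, |h n| ≤ K) :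
    |∑ i ∈ Finset.range M, h (i + 1) - ∑ i ∈ Finset.range M, h i| ≤ 2 * K := by
  rw [← Finset.sum_sub_distrib, Finset.sum_range_sub]
  have h1 := abs_le.1 (hK M)
  have h2 := abs_le.1 (hK 0)
  rw [abs_le]
  constructor <;> linarith

lemma sk_sum_bound (h : ℕ → ℝ) (M : ℕ) (K : ℝ) (hK : ∀ n, |h n| ≤ K) :
    |∑ i ∈ Finset.range M, h i| ≤ M * K := by
  refine (Finset.abs_sum_le_sum_abs _ _).trans ?_
  refine (Finset.sum_le_sum fun i _ => hK i).trans ?_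
  simp

lemma sk_shift1 (H : ℕ → ℕ → ℕ → ℕ → ℝ) (C : ℝ) (hC : ∀ i j a b, |H i j a b| ≤ C) :
    Tendsto (fun M => skAvg (fun i j a b => H (i + 1) j a b) M - skAvg H M) atTop (𝓝 0) := by
  have hb : Tendsto (fun M : ℕ => 2 * C / (M : ℝ)) atTop (𝓝 0) :=
    tendsto_const_div_atTop_nhds_zero_nat _
  refine squeeze_zero_norm' ?_ hb
  filter_upwards [eventually_gt_atTop 0] with M hM
  have hM' : (0 : ℝ) < M := by exact_mod_cast hM
  have key := sk_sum_shift (fun i => ∑ j ∈ Finset.range M,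
    ∑ a ∈ Finset.range M, ∑ b ∈ Finset.range M, H i j a b) M (M * (M * (M * C)))
    (fun i => sk_sum_bound _ _ _ fun j => sk_sum_bound _ _ _ fun a => sk_sum_bound _ _ _ fun b =>
      hC i j a b)
  rw [skAvg, skAvg, ← mul_sub, Real.norm_eq_abs, abs_mul, abs_of_pos (by positivity)]
  calc _ ≤ ((M : ℝ) ^ 4)⁻¹ * (2 * (M * (M * (M * C)))) := by gcongr
    _ = _ := by field_simp

lemma skAvg_swap12 (H : ℕ → ℕ → ℕ → ℕ → ℝ) (M : ℕ) :
    skAvg (fun i j a b => H j i a b) M = skAvg H M := by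
  unfold skAvg
  rw [Finset.sum_comm]

lemma skAvg_swap23 (H : ℕ → ℕ → ℕ → ℕ → ℝ) (M : ℕ) :
    skAvg (fun i j a b => H i a j b) M = skAvg H M := by
  unfold skAvg
  congr 1
  refine Finset.sum_congr rfl fun i _ => ?_
  rw [Finset.sum_comm]

lemma skAvg_swap34 (H : ℕ → ℕ → ℕ → ℕ → ℝ) (M : ℕ) :
    skAvg (fun i j a b => H i j b a) M = skAvg H M := by
  unfold skAvg
  congr 1
  refine Finset.sum_congr rfl fun i _ => Finset.sum_congr rfl fun j _ => ?_
  rw [Finset.sum_comm]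

lemma sk_shift2 (H : ℕ → ℕ → ℕ → ℕ → ℝ) (C : ℝ) (hC : ∀ i j a b, |H i j a b| ≤ C) :
    Tendsto (fun M => skAvg (fun i j a b => H i (j + 1) a b) M - skAvg H M) atTop (𝓝 0) := by
  refine (sk_shift1 (fun i j a b => H j i a b) C (fun i j a b => hC j i a b)).congr fun M => ?_
  rw [← skAvg_swap12 H, ← skAvg_swap12 (fun i j a b => H i (j + 1) a b)]

lemma sk_shift3 (H : ℕ → ℕ → ℕ → ℕ → ℝ) (C : ℝ) (hC : ∀ i j a b, |H i j a b| ≤ C) :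
    Tendsto (fun M => skAvg (fun i j a b => H i j (a + 1) b) M - skAvg H M) atTop (𝓝 0) := by
  refine (sk_shift2 (fun i j a b => H i a j b) C (fun i j a b => hC i a j b)).congr fun M => ?_
  rw [← skAvg_swap23 H, ← skAvg_swap23 (fun i j a b => H i j (a + 1) b)]

lemma sk_shift4 (H : ℕ → ℕ → ℕ → ℕ → ℝ) (C : ℝ) (hC : ∀ i j a b, |H i j a b| ≤ C) :
    Tendsto (fun M => skAvg (fun i j a b => H i j a (b + 1)) M - skAvg H M) atTop (𝓝 0) := by
  refine (sk_shift3 (fun i j a b => H i j b a) C (fun i j a b => hC i j b a)).congr fun M => ?_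
  rw [← skAvg_swap34 H, ← skAvg_swap34 (fun i j a b => H i j a (b + 1))]

/-- The orbit points of the cube. -/
def skPt {X : Type*} (s t : Equiv.Perm X) (x : X) (i j a b : ℕ) : X × X × X × X :=
  ((s ^ (i : ℤ)) ((t ^ (j : ℤ)) x), (s ^ (a : ℤ)) ((t ^ (j : ℤ)) x),
    (s ^ (i : ℤ)) ((t ^ (b : ℤ)) x), (s ^ (a : ℤ)) ((t ^ (b : ℤ)) x))

lemma sk_comm_apply {X : Type*} {s t : Equiv.Perm X} (h : Commute s t) (m n : ℤ) (x : X) :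
    (s ^ m) ((t ^ n) x) = (t ^ n) ((s ^ m) x) := by
  rw [← Equiv.Perm.mul_apply, ← Equiv.Perm.mul_apply, (h.zpow_zpow m n).eq]

lemma sk_succ {X : Type*} (s : Equiv.Perm X) (n : ℕ) (x : X) :
    (s ^ ((n + 1 : ℕ) : ℤ)) x = s ((s ^ (n : ℤ)) x) := by
  rw [← Equiv.Perm.mul_apply, ← zpow_one_add]
  congr 2
  push_cast
  ring

lemma skPt_sideS {X : Type*} (s t : Equiv.Perm X) (x : X) (i j a b : ℕ) :
    sideS s (skPt s t x i j a b) = skPt s t x i j (a + 1) b := by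
  simp only [skPt, sk_succ]
  rfl

lemma skPt_sideT {X : Type*} (s t : Equiv.Perm X) (h : Commute s t) (x : X) (i j a b : ℕ) :
    sideT t (skPt s t x i j a b) = skPt s t x i j a (b + 1) := by
  simp only [skPt, sk_comm_apply h]
  simp only [sk_succ]
  rfl

lemma skPt_diagS {X : Type*} (s t : Equiv.Perm X) (x : X) (i j a b : ℕ) :
    diag4 s (skPt s t x i j a b) = skPt s t x (i + 1) j (a + 1) b := by
  simp only [skPt, sk_succ]
  rfl

lemma skPt_diagT {X : Type*} (s t : Equiv.Perm X) (h : Commute s t) (x : X) (i j a b : ℕ) :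
    diag4 t (skPt s t x i j a b) = skPt s t x i (j + 1) a (b + 1) := by
  simp only [skPt, sk_comm_apply h]
  simp only [sk_succ]
  rfl

lemma skPt_mem {X : Type*} [TopologicalSpace X] (S T : X ≃ₜ X)
    (h : Commute (S.toEquiv : Equiv.Perm X) (T.toEquiv : Equiv.Perm X)) (x : X) (i j a b : ℕ) :
    skPt S.toEquiv T.toEquiv x i j a b ∈ cubeQ S T := by
  apply subset_closure
  set s : Equiv.Perm X := S.toEquiv
  set t : Equiv.Perm X := T.toEquiv
  have e1 : ∀ y, (s ^ (a : ℤ)) y = (s ^ ((a : ℤ) - i)) ((s ^ (i : ℤ)) y) := by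
    intro y
    rw [← Equiv.Perm.mul_apply, ← zpow_add, sub_add_cancel]
  have e2 : ∀ y, (t ^ (b : ℤ)) y = (t ^ ((b : ℤ) - j)) ((t ^ (j : ℤ)) y) := by
    intro y
    rw [← Equiv.Perm.mul_apply, ← zpow_add, sub_add_cancel]
  refine ⟨(s ^ (i : ℤ)) ((t ^ (j : ℤ)) x), (a : ℤ) - i, (b : ℤ) - j, ?_⟩
  simp only [skPt, e1, e2]
  rw [sk_comm_apply h i ((b : ℤ) - j)]

/-- The empirical measures. -/
noncomputable def skEmp {X : Type*} [MeasurableSpace X] (s t : Equiv.Perm X) (x : X) (M : ℕ) :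
    Measure (X × X × X × X) :=
  (((M : ENNReal) ^ 4)⁻¹) • ∑ q ∈ Finset.range M ×ˢ Finset.range M ×ˢ Finset.range M ×ˢ
    Finset.range M, Measure.dirac (skPt s t x q.1 q.2.1 q.2.2.1 q.2.2.2)

lemma skEmp_prob {X : Type*} [MeasurableSpace X] (s t : Equiv.Perm X) (x : X) (M : ℕ)
    (hM : M ≠ 0) : IsProbabilityMeasure (skEmp s t x M) := by
  constructor
  have hM' : (M : ENNReal) ≠ 0 := by exact_mod_cast hM
  simp only [skEmp, Measure.smul_apply, Measure.finsetSum_apply, measure_univ, smul_eq_mul,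
    Finset.sum_const, Finset.card_product, Finset.card_range, nsmul_eq_mul, mul_one]
  have : ((M * (M * (M * M)) : ℕ) : ENNReal) = (M : ENNReal) ^ 4 := by push_cast; ring
  rw [this]
  exact ENNReal.inv_mul_cancel (by positivity) (by finiteness)

lemma skEmp_null {X : Type*} [MeasurableSpace X] (s t : Equiv.Perm X) (x : X) (M : ℕ)
    (A : Set (X × X × X × X)) (hA : MeasurableSet A)
    (h : ∀ i j a b, skPt s t x i j a b ∉ A) : skEmp s t x M A = 0 := by
  simp [skEmp, Measure.finsetSum_apply, Measure.dirac_apply' _ hA, h]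

lemma skEmp_integral {X : Type*} [MeasurableSpace X] [MeasurableSingletonClass (X × X × X × X)]
    (s t : Equiv.Perm X) (x : X) (M : ℕ) (F : X × X × X × X → ℝ) :
    ∫ q, F q ∂(skEmp s t x M) = skAvg (fun i j a b => F (skPt s t x i j a b)) M := by
  rw [skEmp, integral_smul_measure, integral_finsetSum_measure]
  · simp only [integral_dirac, Finset.sum_product, skAvg, smul_eq_mul]
    simp
  · intro q _
    exact integrable_dirac (by simp)

end SkewHelpers

/-- if `(X,S,T)` is strictly ergodic with unique invariant measure `μ` and the
cube system `(Q_{S,T}(X), G_{S,T})` is uniquely ergodic with unique invariant measure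
`μ_{S,T}`, then the skewed four-fold averages converge everywhere to
`∫ f0 ⊗ f1 ⊗ f2 ⊗ f3 dμ_{S,T}`. -/
theorem everywhere_convergence_skew_average
    {X : Type*} [MetricSpace X] [CompactSpace X] [MeasurableSpace X] [BorelSpace X]
    (S T : X ≃ₜ X) (hcomm : ∀ x, S (T x) = T (S x))
    (μ : Measure X) [IsProbabilityMeasure μ]
    -- (X,S,T) is strictly ergodic with unique invariant measure μ
    (hmin : ∀ x y : X, y ∈ closure {z | ∃ i j : ℤ, z = (S.toEquiv ^ i) ((T.toEquiv ^ j) x)})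
    (hSinv : MeasurePreserving ⇑S μ μ) (hTinv : MeasurePreserving ⇑T μ μ)
    (huniq : ∀ ν : Measure X, IsProbabilityMeasure ν → MeasurePreserving ⇑S ν ν →
      MeasurePreserving ⇑T ν ν → ν = μ)
    -- μ_{S,T} is the Host measure built from μ
    (μS : Measure (X × X)) (hμS : IsRelIndJoining μ ⇑S μS)
    (μST : Measure (X × X × X × X)) (hμST : IsHostJoining μS ⇑T μST)
    -- the cube system is uniquely ergodic with unique invariant measure μ_{S,T}
    (hSTprob : IsProbabilityMeasure μST) (hSTsupp : μST (cubeQ S T)ᶜ = 0)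
    (hSTinv : ∀ g ∈ GST S.toEquiv T.toEquiv, ∀ s : Set (X × X × X × X),
      MeasurableSet s → μST (⇑g ⁻¹' s) = μST s)
    (hSTuniq : ∀ ν : Measure (X × X × X × X), IsProbabilityMeasure ν →
      ν (cubeQ S T)ᶜ = 0 →
      (∀ g ∈ GST S.toEquiv T.toEquiv, ∀ s : Set (X × X × X × X),
        MeasurableSet s → ν (⇑g ⁻¹' s) = ν s) →
      ν = μST)
    (f0 f1 f2 f3 : X → ℝ) (hf0 : Continuous f0) (hf1 : Continuous f1)
    (hf2 : Continuous f2) (hf3 : Continuous f3) :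
    ∀ x : X, Tendsto (fun N : ℕ =>
      ((N : ℝ) ^ 4)⁻¹ * ∑ i ∈ Finset.range N, ∑ j ∈ Finset.range N,
        ∑ k ∈ Finset.Icc (-(i : ℤ)) ((N : ℤ) - 1 - i),
          ∑ p ∈ Finset.Icc (-(j : ℤ)) ((N : ℤ) - 1 - j),
            f0 ((S.toEquiv ^ (i : ℤ)) ((T.toEquiv ^ (j : ℤ)) x)) *
            f1 ((S.toEquiv ^ ((i : ℤ) + k)) ((T.toEquiv ^ (j : ℤ)) x)) *
            f2 ((S.toEquiv ^ (i : ℤ)) ((T.toEquiv ^ ((j : ℤ) + p)) x)) *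
            f3 ((S.toEquiv ^ ((i : ℤ) + k)) ((T.toEquiv ^ ((j : ℤ) + p)) x)))
      atTop (nhds (∫ q, f0 q.1 * f1 q.2.1 * f2 q.2.2.1 * f3 q.2.2.2 ∂μST)) := by
  intro x
  have hc : Commute (S.toEquiv : Equiv.Perm X) (T.toEquiv : Equiv.Perm X) := by
    ext y
    exact hcomm y
  set F : X × X × X × X → ℝ := fun q => f0 q.1 * f1 q.2.1 * f2 q.2.2.1 * f3 q.2.2.2 with hF
  have hFc : Continuous F := by fun_prop
  have hconv : ∀ F : BoundedContinuousFunction (X × X × X × X) ℝ,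
      Tendsto (fun M => skAvg (fun i j a b => F (skPt S.toEquiv T.toEquiv x i j a b)) M) atTop
        (𝓝 (∫ q, F q ∂μST)) := by
    intro F
    rw [← tendsto_add_atTop_iff_nat 1, tendsto_iff_ultrafilter]
    intro 𝓤 h𝓤
    have hsh : Tendsto (fun n : ℕ => n + 1) 𝓤 atTop := (tendsto_add_atTop_nat 1).mono_left h𝓤
    let ν : ℕ → ProbabilityMeasure (X × X × X × X) := fun n =>
      ⟨skEmp S.toEquiv T.toEquiv x (n + 1), skEmp_prob _ _ _ _ n.succ_ne_zero⟩
    obtain ⟨m, -, hm⟩ := isCompact_univ.ultrafilter_le_nhds (𝓤.map ν) (by simp)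
    have hm' : Tendsto ν 𝓤 (𝓝 m) := hm
    have hint := ProbabilityMeasure.tendsto_iff_forall_integral_tendsto.1 hm'
    have hint' : ∀ G : BoundedContinuousFunction (X × X × X × X) ℝ,
        Tendsto (fun n => skAvg (fun i j a b => G (skPt S.toEquiv T.toEquiv x i j a b)) (n + 1)) 𝓤
          (𝓝 (∫ q, G q ∂(m : Measure (X × X × X × X)))) := by
      intro G
      refine (hint G).congr fun n => ?_
      exact skEmp_integral _ _ _ _ _
    -- invariance from asymptotic invariance
    have hpres : ∀ g : X × X × X × X → X × X × X × X, Continuous g →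
        (∀ G : BoundedContinuousFunction (X × X × X × X) ℝ,
          Tendsto (fun M => skAvg (fun i j a b => G (g (skPt S.toEquiv T.toEquiv x i j a b))) M
            - skAvg (fun i j a b => G (skPt S.toEquiv T.toEquiv x i j a b)) M) atTop (𝓝 0)) →
        MeasurePreserving g (m : Measure (X × X × X × X)) m := by
      intro g hg h
      refine ⟨hg.measurable, ?_⟩
      have : IsProbabilityMeasure (Measure.map g (m : Measure (X × X × X × X))) :=
        Measure.isProbabilityMeasure_map hg.measurable.aemeasurable
      refine ext_of_forall_integral_eq_of_IsFiniteMeasure fun G => ?_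
      rw [integral_map hg.measurable.aemeasurable G.continuous.aestronglyMeasurable]
      have h1 := hint' (G.compContinuous ⟨g, hg⟩)
      have h2 := hint' G
      have h3 := tendsto_nhds_unique (h1.sub h2) ((h G).comp hsh)
      exact sub_eq_zero.1 h3
    have hbd : ∀ (G : BoundedContinuousFunction (X × X × X × X) ℝ) q, |G q| ≤ ‖G‖ :=
      fun G q => G.norm_coe_le_norm q
    have hS : MeasurePreserving (sideS S.toEquiv) (m : Measure (X × X × X × X)) m := by
      refine hpres _ ?_ fun G => ?_
      · exact continuous_id.prodMap (S.continuous.prodMap (continuous_id.prodMap S.continuous))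
      · simp only [skPt_sideS]
        exact sk_shift3 (fun i j a b => G (skPt S.toEquiv T.toEquiv x i j a b)) ‖G‖
          fun _ _ _ _ => hbd _ _
    have hT : MeasurePreserving (sideT T.toEquiv) (m : Measure (X × X × X × X)) m := by
      refine hpres _ ?_ fun G => ?_
      · exact continuous_id.prodMap (continuous_id.prodMap (T.continuous.prodMap T.continuous))
      · simp only [skPt_sideT _ _ hc]
        exact sk_shift4 (fun i j a b => G (skPt S.toEquiv T.toEquiv x i j a b)) ‖G‖
          fun _ _ _ _ => hbd _ _
    have hdS : MeasurePreserving (diag4 S.toEquiv) (m : Measure (X × X × X × X)) m := by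
      refine hpres _ ?_ fun G => ?_
      · exact S.continuous.prodMap (S.continuous.prodMap (S.continuous.prodMap S.continuous))
      · simp only [skPt_diagS]
        have h1 := sk_shift1 (fun i j a b => G (skPt S.toEquiv T.toEquiv x i j (a + 1) b)) ‖G‖
          fun _ _ _ _ => hbd _ _
        have h2 := sk_shift3 (fun i j a b => G (skPt S.toEquiv T.toEquiv x i j a b)) ‖G‖
          fun _ _ _ _ => hbd _ _
        simpa using h1.add h2
    have hdT : MeasurePreserving (diag4 T.toEquiv) (m : Measure (X × X × X × X)) m := by
      refine hpres _ ?_ fun G => ?_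
      · exact T.continuous.prodMap (T.continuous.prodMap (T.continuous.prodMap T.continuous))
      · simp only [skPt_diagT _ _ hc]
        have h1 := sk_shift2 (fun i j a b => G (skPt S.toEquiv T.toEquiv x i j a (b + 1))) ‖G‖
          fun _ _ _ _ => hbd _ _
        have h2 := sk_shift4 (fun i j a b => G (skPt S.toEquiv T.toEquiv x i j a b)) ‖G‖
          fun _ _ _ _ => hbd _ _
        simpa using h1.add h2
    have hinv : ∀ g : Equiv.Perm (X × X × X × X),
        MeasurePreserving g (m : Measure (X × X × X × X)) m → Measurable g.symm →
        MeasurePreserving g.symm (m : Measure (X × X × X × X)) m := by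
      intro g h1 h2
      exact MeasurePreserving.symm (⟨g, h1.measurable, h2⟩ : (X × X × X × X) ≃ᵐ _) h1
    have hdiag : ∀ g ∈ Subgroup.closure {(S.toEquiv : Equiv.Perm X), T.toEquiv},
        MeasurePreserving (diag4 g) (m : Measure (X × X × X × X)) m ∧
          Measurable (diag4 g).symm := by
      intro g hg
      induction hg using Subgroup.closure_induction with
      | mem g hg =>
        rcases hg with rfl | rfl
        · refine ⟨hdS, Continuous.measurable ?_⟩
          exact S.symm.continuous.prodMap (S.symm.continuous.prodMap
            (S.symm.continuous.prodMap S.symm.continuous))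
        · refine ⟨hdT, Continuous.measurable ?_⟩
          exact T.symm.continuous.prodMap (T.symm.continuous.prodMap
            (T.symm.continuous.prodMap T.symm.continuous))
      | one => exact ⟨MeasurePreserving.id _, measurable_id⟩
      | mul g h _ _ hg hh => exact ⟨hg.1.comp hh.1, hh.2.comp hg.2⟩
      | inv g _ hg => exact ⟨hinv _ hg.1 hg.2, hg.1.measurable⟩
    have hall : ∀ g ∈ GST S.toEquiv T.toEquiv,
        MeasurePreserving g (m : Measure (X × X × X × X)) m ∧ Measurable g.symm := by
      intro g hg
      induction hg using Subgroup.closure_induction with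
      | mem g hg =>
        rcases hg with (rfl | rfl) | ⟨g, hg, rfl⟩
        · refine ⟨hS, Continuous.measurable ?_⟩
          exact continuous_id.prodMap (S.symm.continuous.prodMap
            (continuous_id.prodMap S.symm.continuous))
        · refine ⟨hT, Continuous.measurable ?_⟩
          exact continuous_id.prodMap (continuous_id.prodMap
            (T.symm.continuous.prodMap T.symm.continuous))
        · exact hdiag g hg
      | one => exact ⟨MeasurePreserving.id _, measurable_id⟩
      | mul g h _ _ hg hh => exact ⟨hg.1.comp hh.1, hh.2.comp hg.2⟩
      | inv g _ hg => exact ⟨hinv _ hg.1 hg.2, hg.1.measurable⟩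
    have hopen : IsOpen (cubeQ S T)ᶜ := isClosed_closure.isOpen_compl
    have hsupp : (m : Measure (X × X × X × X)) (cubeQ S T)ᶜ = 0 := by
      have h1 := ProbabilityMeasure.le_liminf_measure_open_of_tendsto hm' hopen
      have h2 : ∀ n, (ν n : Measure (X × X × X × X)) (cubeQ S T)ᶜ = 0 := fun n =>
        skEmp_null _ _ _ _ _ hopen.measurableSet fun i j a b h => h (skPt_mem S T hc x i j a b)
      simp only [h2, liminf_const] at h1
      exact le_antisymm h1 bot_le
    have heq : (m : Measure (X × X × X × X)) = μST :=
      hSTuniq m inferInstance hsupp fun g hg s hs =>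
        (hall g hg).1.measure_preimage hs.nullMeasurableSet
    rw [← heq]
    exact hint' F
  refine (hconv (BoundedContinuousFunction.mkOfCompact ⟨F, hFc⟩)).congr fun N => ?_
  simp only [skAvg, BoundedContinuousFunction.mkOfCompact_apply, ContinuousMap.coe_mk, hF, skPt]
  congr 1
  refine Finset.sum_congr rfl fun i _ => Finset.sum_congr rfl fun j _ => ?_
  rw [← sk_reindex N i (fun a => ∑ b ∈ Finset.range N,
    f0 ((S.toEquiv ^ (i : ℤ)) ((T.toEquiv ^ (j : ℤ)) x)) *
            f1 ((S.toEquiv ^ a) ((T.toEquiv ^ (j : ℤ)) x)) *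
            f2 ((S.toEquiv ^ (i : ℤ)) ((T.toEquiv ^ (b : ℤ)) x)) *
            f3 ((S.toEquiv ^ a) ((T.toEquiv ^ (b : ℤ)) x)))]
  refine Finset.sum_congr rfl fun k _ => ?_
  rw [← sk_reindex N j (fun b =>
    f0 ((S.toEquiv ^ (i : ℤ)) ((T.toEquiv ^ (j : ℤ)) x)) *
            f1 ((S.toEquiv ^ ((i : ℤ) + k)) ((T.toEquiv ^ (j : ℤ)) x)) *
            f2 ((S.toEquiv ^ (i : ℤ)) ((T.toEquiv ^ b) x)) *
            f3 ((S.toEquiv ^ ((i : ℤ) + k)) ((T.toEquiv ^ b) x)))]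
end
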